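/- arXiv:1911.06225 — 4 statements merged into one kernel-verified Lean document; each statement's English description precedes it below -/
import Mathlib

section
/- Let F be the distribution function of a probability measure on ℝ satisfying Condition A. Then the map θ ↦ L(θ; F) = sup_{ψ ∈ SC₀} Ψ(θ, ψ, F) is continuous on ℝ. -/
open MeasureTheory Filter Set
open scoped ENNReal NNReal

noncomputable section

/-- `exp` of an extended real number, valued in `ℝ≥0∞`. -/
def expE (y : EReal) : ℝ≥0∞ :=
  if y = ⊥ then 0 else if y = ⊤ then ⊤ else ENNReal.ofReal (Real.exp y.toReal)

/-- Truncation of an extended real number to `ℝ≥0∞` (negative values go to `0`). -/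
def toENN (y : EReal) : ℝ≥0∞ :=
  if y = ⊤ then ⊤ else ENNReal.ofReal y.toReal

/-- Signed (upper-minus-lower) integral of an `EReal`-valued function against a measure. -/
def eIntegral (μ : Measure ℝ) (ψ : ℝ → EReal) : EReal :=
  ((∫⁻ x, toENN (ψ x) ∂μ : ℝ≥0∞) : EReal) - ((∫⁻ x, toENN (-(ψ x)) ∂μ : ℝ≥0∞) : EReal)

/-- Concavity for `EReal`-valued functions on `ℝ`. -/
def EConcave (ψ : ℝ → EReal) : Prop :=
  ∀ x y : ℝ, ∀ t : ℝ, 0 ≤ t → t ≤ 1 →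
    ((t : EReal) * ψ x + (((1 - t) : ℝ) : EReal) * ψ y) ≤ ψ (t * x + (1 - t) * y)

/-- The class `SC₀` of proper, closed (upper semicontinuous), concave functions
`ℝ → [−∞, ∞)` that are symmetric about `0`. -/
def memSC0 (ψ : ℝ → EReal) : Prop :=
  (∀ x, ψ x < ⊤) ∧ (∃ x, ψ x ≠ ⊥) ∧ UpperSemicontinuous ψ ∧ EConcave ψ ∧ ∀ x, ψ (-x) = ψ x

/-- The criterion function `Ψ(θ, ψ, F) = ∫ ψ(x − θ) dμ(x) − ∫ e^{ψ(x)} dx`. -/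
def Psi (θ : ℝ) (ψ : ℝ → EReal) (μ : Measure ℝ) : EReal :=
  eIntegral μ (fun x => ψ (x - θ)) - ((∫⁻ x, expE (ψ x) : ℝ≥0∞) : EReal)

/-- `L(θ; F) = sup_{ψ ∈ SC₀} Ψ(θ, ψ, F)`. -/
def Ltheta (θ : ℝ) (μ : Measure ℝ) : EReal :=
  ⨆ ψ ∈ {ψ : ℝ → EReal | memSC0 ψ}, Psi θ ψ μ

/-- `L(F) = sup_{θ ∈ ℝ, ψ ∈ SC₀} Ψ(θ, ψ, F)`. -/
def Lsup (μ : Measure ℝ) : EReal := ⨆ θ : ℝ, Ltheta θ μ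

/-- Condition A: `μ` is a probability measure that is not a point mass,
with a finite first absolute moment. -/
def CondA (μ : Measure ℝ) : Prop :=
  IsProbabilityMeasure μ ∧ (∀ x : ℝ, μ ≠ Measure.dirac x) ∧
    (∫⁻ x, ENNReal.ofReal |x| ∂μ) < ⊤

/-- The empirical measure of the data `X₁, …, Xₙ`. -/
def empMeas {n : ℕ} (X : Fin n → ℝ) : Measure ℝ :=
  ((n : ℝ≥0∞))⁻¹ • ∑ i : Fin n, Measure.dirac (X i)

/-- The empirical measure of the first `n` entries of a sequence. -/
def empSeq (X : ℕ → ℝ) (n : ℕ) : Measure ℝ :=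
  ((n : ℝ≥0∞))⁻¹ • ∑ i ∈ Finset.range n, Measure.dirac (X i)

/-- The density `e^ψ` as a real-valued function. -/
def gReal (ψ : ℝ → EReal) (x : ℝ) : ℝ := (expE (ψ x)).toReal

/-- A knot of a concave function `ψ`: a point where the left and right derivatives
differ, or a boundary point of `dom ψ = {ψ > −∞}`. -/
def IsKnot (ψ : ℝ → EReal) (x : ℝ) : Prop :=
  x ∈ frontier {y : ℝ | ψ y ≠ ⊥} ∨
    derivWithin (fun y => (ψ y).toReal) (Set.Iio x) x ≠
      derivWithin (fun y => (ψ y).toReal) (Set.Ioi x) x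

/-- The class `𝒞` of proper closed concave functions `ℝ → [−∞, ∞)`. -/
def memC (φ : ℝ → EReal) : Prop :=
  (∀ x, φ x < ⊤) ∧ (∃ x, φ x ≠ ⊥) ∧ UpperSemicontinuous φ ∧ EConcave φ

/-- The criterion function `ω(φ, F) = ∫ φ dμ − ∫ e^{φ(x)} dx`. -/
def omegaF (φ : ℝ → EReal) (μ : Measure ℝ) : EReal :=
  eIntegral μ φ - ((∫⁻ x, expE (φ x) : ℝ≥0∞) : EReal)

/-- `(θ, ψ)` maximizes `Ψ(·, ·, μ)` over `ℝ × SC₀`. -/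
def IsMaximizer (θ : ℝ) (ψ : ℝ → EReal) (μ : Measure ℝ) : Prop :=
  memSC0 ψ ∧ ∀ (θ' : ℝ) (ψ' : ℝ → EReal), memSC0 ψ' → Psi θ' ψ' μ ≤ Psi θ ψ μ

/-- Condition B: the `θ`-component of a maximizer of `Ψ(·, ·, μ)` is unique. -/
def CondB (μ : Measure ℝ) : Prop :=
  ∀ (θ₁ θ₂ : ℝ) (ψ₁ ψ₂ : ℝ → EReal),
    IsMaximizer θ₁ ψ₁ μ → IsMaximizer θ₂ ψ₂ μ → θ₁ = θ₂

/-- `J(F) = {x : 0 < F(x) < 1}`. -/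
def Jset (μ : Measure ℝ) : Set ℝ := {x : ℝ | 0 < μ (Set.Iic x) ∧ μ (Set.Iic x) < 1}

/-- The Hellinger distance between two densities. -/
def Hdist (f g : ℝ → ℝ) : ℝ :=
  Real.sqrt ((1 / 2) * ∫ x, (Real.sqrt (f x) - Real.sqrt (g x)) ^ 2)

/-- Finite Fisher information for location: `g` is a.e. differentiable with
square-integrable score. -/
def FiniteFisher (g : ℝ → ℝ) : Prop :=
  ∃ D : ℝ → ℝ, (∀ᵐ x : ℝ, HasDerivAt g (D x) x) ∧
    (∫⁻ x, ENNReal.ofReal ((D x) ^ 2 / g x)) < ⊤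

/-- The symmetrization `μ^{sym}_θ = (μ + R_θ#μ)/2` of a measure about `θ`. -/
def symMeas (θ : ℝ) (μ : Measure ℝ) : Measure ℝ :=
  ((2 : ℝ≥0∞))⁻¹ • (μ + Measure.map (fun x => 2 * θ - x) μ)

end

theorem expE_mono : Monotone expE := by
  intro a b h
  induction a using EReal.rec <;> induction b using EReal.rec <;> simp_all [expE]
  exact ENNReal.ofReal_le_ofReal (Real.exp_le_exp.2 h)

theorem toENN_mono : Monotone toENN := by
  intro a b h
  induction a using EReal.rec <;> induction b using EReal.rec <;> simp_all [toENN]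
  exact ENNReal.ofReal_le_ofReal h

theorem expE_coe (x : ℝ) : expE (x : EReal) = ENNReal.ofReal (Real.exp x) := by
  simp [expE]

theorem eIntegral_mono (μ : Measure ℝ) {f g : ℝ → EReal} (h : ∀ x, f x ≤ g x) :
    eIntegral μ f ≤ eIntegral μ g := by
  unfold eIntegral
  apply EReal.sub_le_sub
  · exact_mod_cast lintegral_mono fun x => toENN_mono (h x)
  · exact_mod_cast lintegral_mono fun x => toENN_mono (EReal.neg_le_neg_iff.2 (h x))

theorem eIntegral_coe (μ : Measure ℝ) {g : ℝ → ℝ} (hg : Integrable g μ) :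
    eIntegral μ (fun x => (g x : EReal)) = ((∫ x, g x ∂μ : ℝ) : EReal) := by
  have h1 : (∫⁻ x, ENNReal.ofReal (g x) ∂μ) ≠ ⊤ := hg.lintegral_lt_top.ne
  have h2 : (∫⁻ x, ENNReal.ofReal (-g x) ∂μ) ≠ ⊤ := hg.neg.lintegral_lt_top.ne
  rw [integral_eq_lintegral_pos_part_sub_lintegral_neg_part hg, EReal.coe_sub,
    EReal.coe_ennreal_toReal h1, EReal.coe_ennreal_toReal h2]
  unfold eIntegral
  simp [toENN, ← EReal.coe_neg]

theorem sc_anti {ψ : ℝ → EReal} (h : memSC0 ψ) {x y : ℝ} (hxy : |x| ≤ |y|) : ψ y ≤ ψ x := by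
  obtain ⟨h1, h2, h3, h4, h5⟩ := h
  rcases eq_or_ne y 0 with hy | hy
  · subst hy
    have : x = 0 := by simpa using hxy
    rw [this]
  have hy' : 0 < |y| := abs_pos.2 hy
  have hb : |x / y| ≤ 1 := by rw [abs_div]; exact (div_le_one hy').2 hxy
  obtain ⟨hb1, hb2⟩ := abs_le.1 hb
  have key := h4 y (-y) ((1 + x / y) / 2) (by linarith) (by linarith)
  have e : (1 + x / y) / 2 * y + (1 - (1 + x / y) / 2) * -y = x := by field_simp; ring
  rw [e, h5] at key
  refine le_trans ?_ key
  have ht := h1 y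
  generalize ψ y = z at *
  induction z using EReal.rec with
  | bot => simp
  | top => simp at ht
  | coe z => 
    norm_cast
    apply le_of_eq; ring

theorem sc_zero {ψ : ℝ → EReal} (h : memSC0 ψ) : ∃ m : ℝ, ψ 0 = m := by
  obtain ⟨x, hx⟩ := h.2.1
  have h0 : ψ x ≤ ψ 0 := sc_anti h (by simp)
  have ht := h.1 0
  refine ⟨(ψ 0).toReal, (EReal.coe_toReal ht.ne ?_).symm⟩
  intro hb
  rw [hb] at h0
  exact hx (le_bot_iff.1 h0)

def widen (η : ℝ) (ψ : ℝ → EReal) : ℝ → EReal := fun x => ψ (max (|x| - η) 0)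

theorem widen_mem {η : ℝ} (hη : 0 ≤ η) {ψ : ℝ → EReal} (h : memSC0 ψ) : memSC0 (widen η ψ) := by
  refine ⟨fun x => h.1 _, ⟨0, ?_⟩, ?_, ?_, fun x => by simp [widen]⟩
  · obtain ⟨m, hm⟩ := sc_zero h
    simp [widen, hη, hm]
  · exact h.2.2.1.comp (g := fun x : ℝ => max (|x| - η) 0) (by fun_prop)
  · intro x y t ht0 ht1
    refine (h.2.2.2.1 _ _ t ht0 ht1).trans ?_
    apply sc_anti h
    have a1 : |x| - η ≤ max (|x| - η) 0 := le_max_left _ _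
    have a2 : 0 ≤ max (|x| - η) 0 := le_max_right _ _
    have b1 : |y| - η ≤ max (|y| - η) 0 := le_max_left _ _
    have b2 : 0 ≤ max (|y| - η) 0 := le_max_right _ _
    have hz : 0 ≤ t * max (|x| - η) 0 + (1 - t) * max (|y| - η) 0 := by
      have : 0 ≤ 1 - t := by linarith
      positivity
    rw [abs_of_nonneg (le_max_right _ _), abs_of_nonneg hz]
    refine max_le ?_ hz
    have c : |t * x + (1 - t) * y| ≤ t * |x| + (1 - t) * |y| := by
      refine (abs_add_le _ _).trans ?_
      rw [abs_mul, abs_mul, abs_of_nonneg ht0, abs_of_nonneg (by linarith : 0 ≤ 1 - t)]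
    nlinarith [mul_le_mul_of_nonneg_left a1 ht0, mul_le_mul_of_nonneg_left b1 (by linarith : 0 ≤ 1 - t)]

theorem widen_ge {η : ℝ} {ψ : ℝ → EReal} (h : memSC0 ψ) {θ θ' : ℝ} (hd : |θ' - θ| ≤ η) (x : ℝ) :
    ψ (x - θ) ≤ widen η ψ (x - θ') := by
  apply sc_anti h
  rw [abs_of_nonneg (le_max_right _ _)]
  refine max_le ?_ (abs_nonneg _)
  have : |x - θ'| ≤ |x - θ| + |θ' - θ| := by
    have := abs_sub_abs_le_abs_sub (x - θ') (x - θ)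
    rw [show x - θ' - (x - θ) = -(θ' - θ) by ring, abs_neg] at this
    linarith
  linarith

theorem widen_exp {η : ℝ} (hη : 0 ≤ η) {ψ : ℝ → EReal} (h : memSC0 ψ) {m : ℝ} (hm : ψ 0 = m) :
    ∫⁻ x, expE (widen η ψ x) ≤ (∫⁻ x, expE (ψ x)) + ENNReal.ofReal (2 * η * Real.exp m) := by
  set f : ℝ → ℝ≥0∞ := fun x => expE (ψ x) with hf
  have hfm : Measurable f := expE_mono.measurable.comp h.2.2.1.measurable
  set p : ℝ → ℝ≥0∞ := (Ioi (0:ℝ)).indicator f with hp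
  set n : ℝ → ℝ≥0∞ := (Iio (0:ℝ)).indicator f with hn
  have hpm : Measurable p := hfm.indicator measurableSet_Ioi
  have hnm : Measurable n := hfm.indicator measurableSet_Iio
  have hpt : ∀ x, expE (widen η ψ x) ≤
      (p (x - η) + n (x + η)) + (Icc (-η) η).indicator (fun _ => ENNReal.ofReal (Real.exp m)) x := by
    intro x
    by_cases hx : |x| ≤ η
    · have : x ∈ Icc (-η) η := abs_le.1 hx
      rw [indicator_of_mem this, widen, max_eq_right (by linarith), hm, expE_coe]
      exact le_add_self
    · push Not at hx
      rw [widen, max_eq_left (by linarith)]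
      rcases le_total 0 x with h0 | h0
      · rw [abs_of_nonneg h0] at *
        have : p (x - η) = expE (ψ (x - η)) := by
          rw [hp, indicator_of_mem (by simpa using hx)]
        rw [← this, add_assoc]; exact le_self_add
      · rw [abs_of_nonpos h0] at *
        have : n (x + η) = expE (ψ (-x - η)) := by
          rw [hn, indicator_of_mem (by simp; linarith)]
          change expE (ψ (x + η)) = _
          rw [← h.2.2.2.2 (x + η)]
          congr 2; ring
        rw [← this]; exact le_self_add.trans' le_add_self
  calc _ ≤ ∫⁻ x, ((p (x - η) + n (x + η)) + (Icc (-η) η).indicator (fun _ => ENNReal.ofReal (Real.exp m)) x) :=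
        lintegral_mono hpt
    _ = (∫⁻ x, p x) + (∫⁻ x, n x) + ENNReal.ofReal (2 * η * Real.exp m) := by
        rw [lintegral_add_left (by fun_prop), lintegral_add_left (by fun_prop),
          lintegral_sub_right_eq_self, lintegral_add_right_eq_self,
          lintegral_indicator measurableSet_Icc, setLIntegral_const, Real.volume_Icc,
          ← ENNReal.ofReal_mul (Real.exp_pos m).le]
        congr 2; ring
    _ ≤ _ := by
        refine add_le_add ?_ le_rfl
        rw [← lintegral_add_left hpm]
        apply lintegral_mono
        intro x
        simp only [hp, hn, indicator, mem_Ioi, mem_Iio]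
        split_ifs
        · linarith
        · simp [hf]
        · simp [hf]
        · simp

theorem ereal_aux {A : EReal} {B : ℝ≥0∞} {c k : ℝ} (hk : 0 ≤ k) (h : (c : EReal) < A - (B : EReal)) :
    ((c - k : ℝ) : EReal) < A - ((B + ENNReal.ofReal k : ℝ≥0∞) : EReal) := by
  rcases eq_or_ne B ⊤ with hB | hB
  · subst hB; simp at h
  lift B to ℝ≥0 using hB
  rw [show ((B : ℝ≥0∞) : EReal) = ((B : ℝ) : EReal) from rfl] at h
  rw [EReal.coe_ennreal_add, show ((B : ℝ≥0∞) : EReal) = ((B : ℝ) : EReal) from rfl,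
    EReal.coe_ennreal_ofReal, max_eq_left hk]
  induction A using EReal.rec with
  | bot => simp at h
  | top => rw [← EReal.coe_add, EReal.top_sub_coe]; exact EReal.coe_lt_top _
  | coe a => norm_cast at *; linarith

theorem Psi_widen {μ : Measure ℝ} {η : ℝ} {ψ : ℝ → EReal} (h : memSC0 ψ) {m : ℝ} (hm : ψ 0 = m)
    {θ θ' : ℝ} (hd : |θ' - θ| ≤ η) {c : ℝ} (hc : (c : EReal) < Psi θ ψ μ) :
    ((c - 2 * η * Real.exp m : ℝ) : EReal) < Ltheta θ' μ := by
  have hη : 0 ≤ η := (abs_nonneg _).trans hd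
  have h1 := ereal_aux (k := 2 * η * Real.exp m) (by positivity) hc
  have h2 : Psi θ' (widen η ψ) μ ≤ Ltheta θ' μ :=
    le_iSup₂_of_le (f := fun ψ (_ : ψ ∈ {ψ : ℝ → EReal | memSC0 ψ}) => Psi θ' ψ μ)
      (widen η ψ) (widen_mem hη h) le_rfl
  refine h1.trans_le (le_trans ?_ h2)
  apply EReal.sub_le_sub
  · exact eIntegral_mono μ (widen_ge h hd)
  · exact_mod_cast widen_exp hη h hm

theorem far_mass {μ : Measure ℝ} [IsProbabilityMeasure μ] {θ : ℝ} (h : μ ≠ Measure.dirac θ) :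
    ∃ r : ℝ, 0 < r ∧ 0 < μ.real {x | 2 * r ≤ |x - θ|} := by
  by_contra! hc
  apply h
  have h0 : ∀ n : ℕ, μ {x | 2 * (1 / ((n : ℝ) + 1)) ≤ |x - θ|} = 0 := by
    intro n
    have := hc (1 / ((n : ℝ) + 1)) (by positivity)
    exact (measureReal_eq_zero_iff).1 (le_antisymm this measureReal_nonneg)
  have hae : (id : ℝ → ℝ) =ᵐ[μ] fun _ => θ := by
    have h1 : ∀ᵐ x ∂μ, ∀ n : ℕ, ¬ (2 * (1 / ((n : ℝ) + 1)) ≤ |x - θ|) := by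
      rw [ae_all_iff]; intro n
      rw [ae_iff]; simpa using h0 n
    filter_upwards [h1] with x hx
    by_contra hne
    have hpos : 0 < |x - θ| := abs_pos.2 (sub_ne_zero.2 hne)
    obtain ⟨n, hn⟩ := exists_nat_one_div_lt (half_pos hpos)
    exact hx n (by linarith)
  have : Measure.map (id : ℝ → ℝ) μ = Measure.map (fun _ => θ) μ := Measure.map_congr hae
  rw [Measure.map_id, Measure.map_const] at this
  simpa using this

theorem eInt_upper {μ : Measure ℝ} [IsProbabilityMeasure μ] {ψ : ℝ → EReal} (h : memSC0 ψ)
    {m s r θ ε : ℝ} (hr : 0 ≤ r) (hm : ψ 0 = m) (hs : ψ r ≤ s) (hsm : s ≤ m)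
    (hε : ε ≤ μ.real {x | r ≤ |x - θ|}) :
    eIntegral μ (fun x => ψ (x - θ)) ≤ ((m - ε * (m - s) : ℝ) : EReal) := by
  set E : Set ℝ := {x | r ≤ |x - θ|} with hE
  have hEm : MeasurableSet E := measurableSet_le (by fun_prop) (by fun_prop)
  set g : ℝ → ℝ := fun x => m - E.indicator (fun _ => m - s) x with hg
  have hi : Integrable (E.indicator (fun _ => m - s)) μ := (integrable_const _).indicator hEm
  have hgi : Integrable g μ := (integrable_const _).sub hi
  have h1 : ∀ x, ψ (x - θ) ≤ (g x : EReal) := by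
    intro x
    by_cases hx : x ∈ E
    · simp only [hg, indicator_of_mem hx, sub_sub_cancel]
      refine (sc_anti h ?_).trans hs
      rw [abs_of_nonneg hr]; exact hx
    · simp only [hg, indicator_of_notMem hx, sub_zero]
      rw [← hm]; exact sc_anti h (by simp)
  refine (eIntegral_mono μ h1).trans ?_
  rw [eIntegral_coe μ hgi, EReal.coe_le_coe_iff]
  simp only [hg]
  rw [integral_sub (integrable_const _) hi, integral_indicator hEm, setIntegral_const]
  simp only [integral_const, smul_eq_mul, probReal_univ, one_mul]
  nlinarith

theorem exp_lower {ψ : ℝ → EReal} (h : memSC0 ψ) {m s r : ℝ} (hr : 0 < r) (hm : ψ 0 = m)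
    (hs : ψ r = s) (hsm : s ≤ m) :
    ENNReal.ofReal (2 * r / (1 + (m - s)) * Real.exp (m - 1)) ≤ ∫⁻ x, expE (ψ x) := by
  have hd : 0 < 1 + (m - s) := by linarith
  set ρ := r / (1 + (m - s)) with hρ
  have hρ0 : 0 < ρ := by positivity
  have key : ((m - 1 : ℝ) : EReal) ≤ ψ ρ := by
    have := h.2.2.2.1 r 0 (1 / (1 + (m - s))) (by positivity)
      ((div_le_one hd).2 (by linarith))
    rw [hs, hm, show 1 / (1 + (m - s)) * r + (1 - 1 / (1 + (m - s))) * 0 = ρ by rw [hρ]; ring] at this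
    refine le_trans ?_ this
    norm_cast
    have : 1 / (1 + (m - s)) * (m - s) ≤ 1 := by
      rw [one_div_mul_eq_div]; exact (div_le_one hd).2 (by linarith)
    linarith
  calc _ = ∫⁻ x in Icc (-ρ) ρ, ENNReal.ofReal (Real.exp (m - 1)) := by
        rw [setLIntegral_const, Real.volume_Icc, ← ENNReal.ofReal_mul (Real.exp_pos _).le]
        congr 1; rw [hρ]; ring
    _ ≤ ∫⁻ x in Icc (-ρ) ρ, expE (ψ x) := by
        apply setLIntegral_mono' measurableSet_Icc
        intro x hx
        rw [← expE_coe]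
        apply expE_mono
        refine key.trans (sc_anti h ?_)
        rw [abs_of_pos hρ0]; exact abs_le.2 hx
    _ ≤ _ := setLIntegral_le_lintegral _ _

theorem m_bound {μ : Measure ℝ} [IsProbabilityMeasure μ] {r ε c : ℝ} (hr : 0 < r) (hε : 0 < ε) :
    ∃ M : ℝ, ∀ (θ : ℝ) (ψ : ℝ → EReal) (m : ℝ), ε ≤ μ.real {x | r ≤ |x - θ|} → memSC0 ψ → ψ 0 = m →
      (c : EReal) < Psi θ ψ μ → m ≤ M := by
  set K := 2 * r * Real.exp (c - 1) with hK
  have hK0 : 0 < K := by positivity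
  refine ⟨c + 1 + 6 * (1 + 1 / ε) / K, fun θ ψ m hθ h hm hc => ?_⟩
  have hrm : ψ r ≤ m := by rw [← hm]; exact sc_anti h (by simp)
  rcases eq_or_ne (ψ r) ⊥ with hb | hb
  · exfalso
    set s := min m (m - (m - c) / ε) with hs
    have h1 := eInt_upper (s := s) (μ := μ) (θ := θ) h hr.le hm (by rw [hb]; exact bot_le) (min_le_left _ _) hθ
    have h2 : Psi θ ψ μ ≤ eIntegral μ (fun x => ψ (x - θ)) := by
      unfold Psi
      apply EReal.sub_le_of_le_add
      exact le_add_of_nonneg_right (EReal.coe_ennreal_nonneg _)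
    have h3 := hc.trans_le (h2.trans h1)
    rw [EReal.coe_lt_coe_iff] at h3
    have h4 : s ≤ m - (m - c) / ε := min_le_right _ _
    have h5 : ε * ((m - c) / ε) ≤ ε * (m - s) := mul_le_mul_of_nonneg_left (by linarith) hε.le
    rw [mul_div_cancel₀ _ hε.ne'] at h5
    linarith
  obtain ⟨s, hs⟩ : ∃ s : ℝ, ψ r = s := ⟨_, (EReal.coe_toReal (h.1 r).ne hb).symm⟩
  have hsm : s ≤ m := by rw [hs] at hrm; exact_mod_cast hrm
  have h1 := eInt_upper (s := s) (μ := μ) (θ := θ) h hr.le hm hs.le hsm hθ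
  have h2 := exp_lower h hr hm hs hsm
  have hd : 0 < 1 + (m - s) := by linarith
  set X := 2 * r / (1 + (m - s)) * Real.exp (m - 1) with hX
  have hX0 : 0 < X := by positivity
  have h3 : (c : EReal) < ((m - ε * (m - s) - X : ℝ) : EReal) := by
    refine hc.trans_le ?_
    rw [EReal.coe_sub]
    apply EReal.sub_le_sub h1
    have : ((ENNReal.ofReal X : ℝ≥0∞) : EReal) = X := by
      rw [EReal.coe_ennreal_ofReal, max_eq_left hX0.le]
    rw [← this]; exact_mod_cast h2
  rw [EReal.coe_lt_coe_iff] at h3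
  set u := m - c with hu
  set d := m - s with hdd
  have hd0 : 0 ≤ d := by linarith
  have hεd : 0 ≤ ε * d := by positivity
  have hu0 : 0 < u := by linarith
  have hdu : d ≤ u / ε := by rw [le_div_iff₀ hε]; linarith
  have hXe : X * (1 + d) = K * Real.exp u := by
    rw [hX, hK, mul_assoc (2 * r), ← Real.exp_add, show c - 1 + u = m - 1 by rw [hu]; ring]
    field_simp
  have hexp : u ^ 3 / 6 ≤ Real.exp u := by
    have := Real.pow_div_factorial_le_exp u hu0.le 3
    simpa [Nat.factorial] using this
  have h4 : K * (u ^ 3 / 6) ≤ u * (1 + u / ε) := by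
    calc K * (u ^ 3 / 6) ≤ K * Real.exp u := by gcongr
      _ = X * (1 + d) := hXe.symm
      _ ≤ u * (1 + u / ε) := by
        apply mul_le_mul (by linarith) (by linarith) (by linarith) hu0.le
  suffices u ≤ 1 + 6 * (1 + 1 / ε) / K by linarith
  rcases le_total u 1 with h5 | h5
  · have : 0 ≤ 6 * (1 + 1 / ε) / K := by positivity
    linarith
  suffices u ≤ 6 * (1 + 1 / ε) / K by linarith
  rw [le_div_iff₀ hK0]
  have h6 : u * (1 + u / ε) ≤ u * (u * (1 + 1 / ε)) := by
    apply mul_le_mul_of_nonneg_left _ hu0.le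
    have : u * (1 + 1 / ε) = u + u / ε := by ring
    linarith
  have h7 : (u * u) * (u * K) ≤ (u * u) * (6 * (1 + 1 / ε)) := by nlinarith
  exact le_of_mul_le_mul_left h7 (by positivity)

/-- If the distribution `μ` satisfies Condition A, then
`θ ↦ L(θ; F) = sup_{ψ ∈ SC₀} Ψ(θ, ψ, F)` is continuous on `ℝ`. -/
theorem statement0 (μ : Measure ℝ) (hA : CondA μ) :
    Continuous fun θ : ℝ => Ltheta θ μ := by
  obtain ⟨hprob, hnd, -⟩ := hA
  have small : ∀ (a k : ℝ), 0 < k → ∃ η : ℝ, 0 < η ∧ 2 * η * Real.exp a < k := by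
    intro a k hk
    refine ⟨k / (4 * Real.exp a), by positivity, ?_⟩
    have : 2 * (k / (4 * Real.exp a)) * Real.exp a = k / 2 := by
      have := (Real.exp_pos a).ne'
      field_simp; norm_num
    linarith
  rw [continuous_iff_continuousAt]
  intro θ₀
  apply tendsto_order.2 ⟨?_, ?_⟩
  · intro c hc
    obtain ⟨c1, h1, hc1⟩ := EReal.lt_iff_exists_real_btwn.1 hc
    obtain ⟨c2, h2, hc2⟩ := EReal.lt_iff_exists_real_btwn.1 hc1
    rw [EReal.coe_lt_coe_iff] at h2
    simp only [Ltheta, lt_iSup_iff] at hc2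
    obtain ⟨ψ, hψ, hP⟩ := hc2
    obtain ⟨m, hm⟩ := sc_zero hψ
    obtain ⟨η, hη, hk⟩ := small m (c2 - c1) (by linarith)
    filter_upwards [Metric.closedBall_mem_nhds θ₀ hη] with θ hθ
    rw [Metric.mem_closedBall, Real.dist_eq] at hθ
    refine h1.trans (lt_trans ?_ (Psi_widen hψ hm hθ hP))
    rw [EReal.coe_lt_coe_iff]; linarith
  · intro c hc
    obtain ⟨c1, hc1, h1⟩ := EReal.lt_iff_exists_real_btwn.1 hc
    obtain ⟨c2, h2, hc2⟩ := EReal.lt_iff_exists_real_btwn.1 h1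
    rw [EReal.coe_lt_coe_iff] at h2
    obtain ⟨r, hr, hpos⟩ := far_mass (hnd θ₀)
    obtain ⟨M, hM⟩ := m_bound (μ := μ) (c := c2) hr hpos
    obtain ⟨η, hη, hk⟩ := small M (c2 - c1) (by linarith)
    filter_upwards [Metric.closedBall_mem_nhds θ₀ hη, Metric.closedBall_mem_nhds θ₀ hr] with θ hθ hθr
    rw [Metric.mem_closedBall, Real.dist_eq] at hθ hθr
    refine lt_of_le_of_lt (iSup₂_le fun ψ hψ => ?_) hc2
    by_contra! hP
    obtain ⟨m, hm⟩ := sc_zero hψ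
    have hmM := hM θ ψ m ?_ hψ hm hP
    · have := (Psi_widen (θ' := θ₀) (η := η) hψ hm (by rwa [abs_sub_comm]) hP).trans hc1
      rw [EReal.coe_lt_coe_iff] at this
      have : 2 * η * Real.exp m ≤ 2 * η * Real.exp M := by gcongr
      linarith
    · apply measureReal_mono _ (measure_ne_top _ _)
      intro x hx
      simp only [mem_ofPred_eq] at *
      have := abs_sub_le x θ θ₀
      linarith
end

section
/- Let 𝔽 be the distribution function of the point mass δ_{x₀} at some x₀ ∈ ℝ. Then sup_{ψ ∈ SC₀} Ψ(x₀, ψ, 𝔽) = +∞; in particular sup_{θ ∈ ℝ, ψ ∈ SC₀} Ψ(θ, ψ, 𝔽) = +∞, while Ψ(θ, ψ, 𝔽) < ∞ for every θ ∈ ℝ and every ψ ∈ SC₀, so the supremum is not attained (no maximum likelihood estimator exists for degenerate data). -/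
open MeasureTheory Filter Set
open scoped ENNReal NNReal

/-- The function equal to `n` at `0` and `-∞` elsewhere. -/
noncomputable def spike3 (n : ℝ) (x : ℝ) : EReal := if x = 0 then (n : EReal) else ⊥

theorem spike3_mem (n : ℝ) : memSC0 (spike3 n) := by
  refine ⟨?_, ⟨0, by simp [spike3]⟩, ?_, ?_, ?_⟩
  · intro x
    unfold spike3
    split_ifs
    · exact EReal.coe_lt_top n
    · exact bot_lt_top
  · intro x y hy
    by_cases hx : x = 0
    · refine Filter.Eventually.of_forall fun z => lt_of_le_of_lt ?_ hy
      subst hx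
      unfold spike3
      split_ifs <;> simp_all
    · filter_upwards [isOpen_ne.mem_nhds hx] with z hz
      have hz' : z ≠ 0 := hz
      simpa [spike3, hx, hz'] using hy
  · intro x y t h0 h1
    rcases h0.eq_or_lt with rfl | h0
    · simp
    rcases h1.eq_or_lt with rfl | h1
    · simp
    by_cases hx : x = 0
    · by_cases hy : y = 0
      · subst hx hy
        simp only [spike3, mul_zero, add_zero, if_true]
        rw [← EReal.coe_mul, ← EReal.coe_mul, ← EReal.coe_add]
        exact EReal.coe_le_coe_iff.2 (by linarith)
      · have e : spike3 n y = ⊥ := by simp [spike3, hy]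
        rw [e, EReal.coe_mul_bot_of_pos (sub_pos.2 h1), EReal.add_bot]
        exact bot_le
    · simp [spike3, hx, EReal.coe_mul_bot_of_pos h0]
  · intro x
    simp [spike3]

theorem spike3_Psi (x₀ n : ℝ) (hn : 0 ≤ n) :
    Psi x₀ (spike3 n) (Measure.dirac x₀) = n := by
  have h1 : (∫⁻ x, expE (spike3 n x)) = 0 := by
    rw [lintegral_eq_zero_of_ae_eq_zero]
    have : ∀ᵐ x : ℝ, x ≠ 0 := by simp [ae_iff]
    filter_upwards [this] with x hx
    simp [spike3, hx, expE]
  unfold Psi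
  rw [h1]
  simp only [eIntegral, lintegral_dirac, sub_self]
  have h2 : toENN (spike3 n 0) = ENNReal.ofReal n := by simp [toENN, spike3]
  have h3 : toENN (-(spike3 n 0)) = 0 := by
    simp only [toENN, spike3, if_true]
    rw [← EReal.coe_neg, if_neg (EReal.coe_ne_top _), EReal.toReal_coe]
    simp [hn]
  rw [h2, h3]
  simp [hn]

/-- For the point mass at `x₀`, `sup_{ψ ∈ SC₀} Ψ(x₀, ψ, 𝔽) = +∞`, hence
`sup_{θ, ψ} Ψ(θ, ψ, 𝔽) = +∞`, while `Ψ(θ, ψ, 𝔽) < ∞` for each fixed `θ, ψ ∈ SC₀`;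
so no maximizer exists. -/
theorem statement3 (x₀ : ℝ) :
    Ltheta x₀ (Measure.dirac x₀) = ⊤ ∧
      Lsup (Measure.dirac x₀) = ⊤ ∧
      (∀ (θ : ℝ) (ψ : ℝ → EReal), memSC0 ψ → Psi θ ψ (Measure.dirac x₀) < ⊤) ∧
      ¬∃ (θ : ℝ) (ψ : ℝ → EReal), memSC0 ψ ∧
        Psi θ ψ (Measure.dirac x₀) = Lsup (Measure.dirac x₀) := by
  have hL : Ltheta x₀ (Measure.dirac x₀) = ⊤ := by
    rw [EReal.eq_top_iff_forall_lt]
    intro y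
    have hm : (0 : ℝ) ≤ max y 0 + 1 := by positivity
    refine lt_of_lt_of_le (b := ((max y 0 + 1 : ℝ) : EReal)) ?_ ?_
    · exact EReal.coe_lt_coe_iff.2 (by linarith [le_max_left y 0])
    · rw [← spike3_Psi x₀ _ hm]
      exact le_iSup₂ (f := fun ψ (_ : ψ ∈ {ψ : ℝ → EReal | memSC0 ψ}) =>
        Psi x₀ ψ (Measure.dirac x₀)) _ (spike3_mem _)
  have hS : Lsup (Measure.dirac x₀) = ⊤ :=
    top_le_iff.1 (hL ▸ le_iSup (fun θ => Ltheta θ (Measure.dirac x₀)) x₀)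
  have hF : ∀ (θ : ℝ) (ψ : ℝ → EReal), memSC0 ψ → Psi θ ψ (Measure.dirac x₀) < ⊤ := by
    intro θ ψ hψ
    have h1 : toENN (ψ (x₀ - θ)) ≠ ⊤ := by
      simp [toENN, (hψ.1 (x₀ - θ)).ne]
    have key : ∀ (a : EReal) (b : ℝ≥0∞), a < ⊤ → a - (b : EReal) < ⊤ := by
      intro a b ha
      refine lt_of_le_of_lt ?_ ha
      exact EReal.sub_le_of_le_add (le_add_of_nonneg_right (EReal.coe_ennreal_nonneg b))
    unfold Psi eIntegral
    simp only [lintegral_dirac]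
    refine key _ _ (key _ _ ?_)
    exact lt_top_iff_ne_top.2 (by simpa using h1)
  refine ⟨hL, hS, hF, ?_⟩
  rintro ⟨θ, ψ, hψ, h⟩
  exact (hF θ ψ hψ).ne (h.trans hS)
end

section
/- Let X₁, …, Xₙ be real numbers that are not all equal, with empirical distribution function 𝔽ₙ, and let θ̂ ∈ ℝ be a maximizer of θ ↦ sup_{ψ ∈ SC₀} Ψₙ(θ, ψ). Let ψ ∈ SC₀ with ∫_ℝ e^{ψ(x)} dx = 1 and set g = e^{ψ}. Then (θ̂, ψ) maximizes Ψₙ over ℝ × SC₀ if and only if for every function Δ : ℝ → ℝ such that ψ + tΔ ∈ SC₀ for some t > 0, one has ∫ Δ(x − θ̂) d𝔽ₙ(x) ≤ ∫_ℝ Δ(x) g(x) dx. -/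
open MeasureTheory Filter Set
open scoped ENNReal NNReal

/-- build-up -/
lemma s4_concave_iff (f : ℝ → EReal) (hf : ∀ x, f x < ⊤) :
    EConcave f ↔ ∀ x y t : ℝ, 0 < t → t < 1 → f x ≠ ⊥ → f y ≠ ⊥ →
      f (t * x + (1 - t) * y) ≠ ⊥ ∧
      t * (f x).toReal + (1 - t) * (f y).toReal ≤ (f (t * x + (1 - t) * y)).toReal := by
  constructor
  · intro h x y t ht0 ht1 hx hy
    have h1 := h x y t ht0.le ht1.le
    have hz := (hf (t * x + (1 - t) * y)).ne
    have hx' := (hf x).ne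
    have hy' := (hf y).ne
    generalize f (t * x + (1 - t) * y) = c at *
    generalize f x = a at *
    generalize f y = b at *
    lift a to ℝ using ⟨hx', hx⟩
    lift b to ℝ using ⟨hy', hy⟩
    have hc : c ≠ ⊥ := by
      rintro rfl
      rw [← EReal.coe_mul, ← EReal.coe_mul, ← EReal.coe_add] at h1
      exact EReal.coe_ne_bot _ (le_bot_iff.1 h1)
    lift c to ℝ using ⟨hz, hc⟩
    refine ⟨hc, ?_⟩
    simpa using (by exact_mod_cast h1 : t * a + (1 - t) * b ≤ c)
  · intro h x y t ht0 ht1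
    rcases ht0.eq_or_lt with rfl | ht0
    · simp
    rcases ht1.eq_or_lt with rfl | ht1
    · simp
    by_cases hx : f x = ⊥
    · rw [hx, EReal.coe_mul_bot_of_pos ht0, EReal.bot_add]; exact bot_le
    by_cases hy : f y = ⊥
    · rw [hy, EReal.coe_mul_bot_of_pos (sub_pos.2 ht1), EReal.add_bot]; exact bot_le
    obtain ⟨h1, h2⟩ := h x y t ht0 ht1 hx hy
    have hz := (hf (t * x + (1 - t) * y)).ne
    have hx' := (hf x).ne
    have hy' := (hf y).ne
    generalize f (t * x + (1 - t) * y) = c at *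
    generalize f x = a at *
    generalize f y = b at *
    lift a to ℝ using ⟨hx', hx⟩
    lift b to ℝ using ⟨hy', hy⟩
    lift c to ℝ using ⟨hz, h1⟩
    simp only [EReal.toReal_coe] at h2
    exact_mod_cast h2

lemma s4_anti {φ : ℝ → EReal} (h : memSC0 φ) {x y : ℝ} (hxy : |y| ≤ |x|) : φ x ≤ φ y := by
  obtain ⟨h1, _, _, h4, h5⟩ := h
  by_cases hx : φ x = ⊥
  · rw [hx]; exact bot_le
  rcases eq_or_ne x 0 with rfl | hx0
  · have : y = 0 := by simpa using hxy
    rw [this]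
  have hxp : 0 < |x| := abs_pos.2 hx0
  have hq : |y / x| ≤ 1 := by rw [abs_div]; exact (div_le_one hxp).2 hxy
  rw [abs_le] at hq
  have h6 := h4 x (-x) ((1 + y / x) / 2) (by linarith) (by linarith)
  rw [h5] at h6
  have e : (1 + y / x) / 2 * x + (1 - (1 + y / x) / 2) * (-x) = y := by
    field_simp; ring
  rw [e] at h6
  refine le_trans (le_of_eq ?_) h6
  have hx' := (h1 x).ne
  generalize φ x = a at *
  lift a to ℝ using ⟨hx', hx⟩
  norm_cast
  ring

lemma s4_ne_bot {φ : ℝ → EReal} (h : memSC0 φ) {x y : ℝ} (hxy : |y| ≤ |x|) (hx : φ x ≠ ⊥) :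
    φ y ≠ ⊥ := fun hy => hx (by have := s4_anti h hxy; rw [hy] at this; exact le_bot_iff.1 this)

lemma s4_toReal_anti {φ : ℝ → EReal} (h : memSC0 φ) {x y : ℝ} (hxy : |y| ≤ |x|) (hx : φ x ≠ ⊥) :
    (φ x).toReal ≤ (φ y).toReal :=
  EReal.toReal_le_toReal (s4_anti h hxy) hx (h.1 y).ne

lemma s4_coe {h : ℝ → ℝ} (hc : Continuous h) (hconc : ConcaveOn ℝ univ h) (he : ∀ x, h (-x) = h x) :
    memSC0 (fun x => (h x : EReal)) := by
  refine ⟨fun x => EReal.coe_lt_top _, ⟨0, EReal.coe_ne_bot _⟩,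
    (continuous_coe_real_ereal.comp hc).upperSemicontinuous, ?_, fun x => by simp [he]⟩
  rw [s4_concave_iff _ (fun x => EReal.coe_lt_top _)]
  intro x y t h0 h1 _ _
  refine ⟨EReal.coe_ne_bot _, ?_⟩
  have := hconc.2 (mem_univ x) (mem_univ y) h0.le (sub_pos.2 h1).le (by ring)
  simpa using this

noncomputable def s4restr (φ : ℝ → EReal) (M : ℝ) : ℝ → EReal := fun x => if |x| ≤ M then φ x else ⊥

lemma s4_restr {φ : ℝ → EReal} (h : memSC0 φ) {M : ℝ} (hM : 0 ≤ M) (hφ : φ M ≠ ⊥) :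
    memSC0 (s4restr φ M) := by
  have hlt : ∀ x, s4restr φ M x < ⊤ := by
    intro x; unfold s4restr; split_ifs; exacts [h.1 x, bot_lt_top]
  refine ⟨hlt, ⟨M, by simpa [s4restr, abs_of_nonneg hM] using hφ⟩, ?_, ?_, ?_⟩
  · rw [upperSemicontinuous_iff_isClosed_preimage]
    intro c
    rcases eq_or_ne c ⊥ with rfl | hc
    · simp
    have : s4restr φ M ⁻¹' Ici c = {x | |x| ≤ M} ∩ φ ⁻¹' Ici c := by
      ext x
      by_cases hx : |x| ≤ M <;> simp [s4restr, hx, hc]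
    rw [this]
    exact (isClosed_le continuous_abs continuous_const).inter
      (upperSemicontinuous_iff_isClosed_preimage.1 h.2.2.1 c)
  · rw [s4_concave_iff _ hlt]
    intro x y t h0 h1 hx hy
    have hx1 : |x| ≤ M := by by_contra hh; simp [s4restr, hh] at hx
    have hy1 : |y| ≤ M := by by_contra hh; simp [s4restr, hh] at hy
    have hz1 : |t * x + (1 - t) * y| ≤ M := by
      rw [abs_le] at *
      constructor <;> nlinarith
    simp only [s4restr, hx1, hy1, hz1, if_true] at *
    exact (s4_concave_iff φ h.1).1 h.2.2.2.1 x y t h0 h1 hx hy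
  · intro x; simp [s4restr, h.2.2.2.2]

lemma s4_usc_mul {φ : ℝ → EReal} (h : UpperSemicontinuous φ) {a : ℝ} (ha : 0 < a) :
    UpperSemicontinuous (fun x => (a : EReal) * φ x) := by
  refine Continuous.comp_upperSemicontinuous (g := fun y => (a : EReal) * y) ?_ h ?_
  · rw [continuous_iff_continuousAt]
    intro y
    have ha0 : (a : EReal) ≠ 0 := by exact_mod_cast ha.ne'
    exact (EReal.continuousAt_mul (p := ((a : EReal), y)) (Or.inl ha0) (Or.inl ha0)
      (Or.inl (EReal.coe_ne_bot _)) (Or.inl (EReal.coe_ne_top _))).comp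
      (continuousAt_const.prodMk continuousAt_id)
  · intro x y hxy
    exact mul_le_mul_of_nonneg_left hxy (by exact_mod_cast ha.le)

lemma s4_mul_ne_top {y : EReal} (h : y < ⊤) {a : ℝ} (ha : 0 < a) : (a : EReal) * y ≠ ⊤ := by
  induction y with
  | bot => rw [EReal.coe_mul_bot_of_pos ha]; simp
  | coe y => exact_mod_cast EReal.coe_ne_top _
  | top => exact absurd h (lt_irrefl _)

lemma s4_comb {φ ψ : ℝ → EReal} (h : memSC0 φ) (h' : memSC0 ψ) {a b : ℝ} (ha : 0 < a) (hb : 0 < b)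
    (hne : φ 0 ≠ ⊥) (hne' : ψ 0 ≠ ⊥) :
    memSC0 (fun x => (a : EReal) * φ x + (b : EReal) * ψ x) := by
  have hlt : ∀ x, (a : EReal) * φ x + (b : EReal) * ψ x < ⊤ := fun x =>
    EReal.add_lt_top (s4_mul_ne_top (h.1 x) ha) (s4_mul_ne_top (h'.1 x) hb)
  refine ⟨hlt, ⟨0, ?_⟩, ?_, ?_, ?_⟩
  · show (a : EReal) * φ 0 + (b : EReal) * ψ 0 ≠ ⊥
    have h1 := (h.1 0).ne
    have h2 := (h'.1 0).ne
    generalize φ 0 = u at *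
    generalize ψ 0 = v at *
    lift u to ℝ using ⟨h1, hne⟩
    lift v to ℝ using ⟨h2, hne'⟩
    exact_mod_cast EReal.coe_ne_bot _
  · refine UpperSemicontinuous.add' (s4_usc_mul h.2.2.1 ha) (s4_usc_mul h'.2.2.1 hb) ?_
    intro x
    exact EReal.continuousAt_add (Or.inl (s4_mul_ne_top (h.1 x) ha))
      (Or.inr (s4_mul_ne_top (h'.1 x) hb))
  · rw [s4_concave_iff _ hlt]
    intro x y t h0 h1 hx hy
    have aux : ∀ z, (a : EReal) * φ z + (b : EReal) * ψ z ≠ ⊥ → φ z ≠ ⊥ ∧ ψ z ≠ ⊥ := by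
      intro z hz
      constructor
      · intro e; rw [e, EReal.coe_mul_bot_of_pos ha, EReal.bot_add] at hz; exact hz rfl
      · intro e; rw [e, EReal.coe_mul_bot_of_pos hb, EReal.add_bot] at hz; exact hz rfl
    have aux2 : ∀ z, φ z ≠ ⊥ → ψ z ≠ ⊥ → (a : EReal) * φ z + (b : EReal) * ψ z =
        ((a * (φ z).toReal + b * (ψ z).toReal : ℝ) : EReal) := by
      intro z hz hz'
      push_cast
      rw [EReal.coe_toReal (h.1 z).ne hz, EReal.coe_toReal (h'.1 z).ne hz']
    obtain ⟨x1, x2⟩ := aux x hx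
    obtain ⟨y1, y2⟩ := aux y hy
    obtain ⟨p1, p2⟩ := (s4_concave_iff φ h.1).1 h.2.2.2.1 x y t h0 h1 x1 y1
    obtain ⟨q1, q2⟩ := (s4_concave_iff ψ h'.1).1 h'.2.2.2.1 x y t h0 h1 x2 y2
    rw [aux2 _ x1 x2, aux2 _ y1 y2, aux2 _ p1 q1]
    refine ⟨EReal.coe_ne_bot _, ?_⟩
    simp only [EReal.toReal_coe]
    nlinarith [mul_le_mul_of_nonneg_left p2 ha.le, mul_le_mul_of_nonneg_left q2 hb.le]
  · intro x; simp [h.2.2.2.2, h'.2.2.2.2]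

lemma s4_zero_ne_bot {φ : ℝ → EReal} (h : memSC0 φ) : φ 0 ≠ ⊥ := by
  obtain ⟨x, hx⟩ := h.2.1
  exact s4_ne_bot h (by simp) hx

/-! exp / g -/
lemma s4_expE_meas : Measurable expE := by
  unfold expE
  refine Measurable.ite (measurableSet_singleton _) measurable_const
    (Measurable.ite (measurableSet_singleton _) measurable_const ?_)
  exact ENNReal.measurable_ofReal.comp (Real.measurable_exp.comp measurable_ereal_toReal)

lemma s4_expE_lt {y : EReal} (h : y < ⊤) : expE y < ⊤ := by
  unfold expE; split_ifs with h1 h2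
  · simp
  · exact absurd h2 h.ne
  · simp

lemma s4_expE_mono {y z : EReal} (h : y ≤ z) : expE y ≤ expE z := by
  by_cases hy : y = ⊥
  · simp [expE, hy]
  by_cases hz : z = ⊤
  · simp [expE, hz]
  have hy' : y ≠ ⊤ := fun e => hz (by rw [e] at h; exact top_le_iff.1 h)
  have hz' : z ≠ ⊥ := fun e => hy (by rw [e] at h; exact le_bot_iff.1 h)
  simp only [expE, hy, hz, hy', hz', if_false]
  exact ENNReal.ofReal_le_ofReal (Real.exp_le_exp.2 (EReal.toReal_le_toReal h hy hz))

lemma s4_g_nonneg (φ : ℝ → EReal) (x : ℝ) : 0 ≤ gReal φ x := ENNReal.toReal_nonneg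

lemma s4_g_bot {φ : ℝ → EReal} {x : ℝ} (h : φ x = ⊥) : gReal φ x = 0 := by
  simp [gReal, expE, h]

lemma s4_g_exp {φ : ℝ → EReal} (hφ : memSC0 φ) {x : ℝ} (h : φ x ≠ ⊥) :
    gReal φ x = Real.exp (φ x).toReal := by
  simp [gReal, expE, h, (hφ.1 x).ne, (Real.exp_pos _).le]

lemma s4_meas {φ : ℝ → EReal} (hφ : memSC0 φ) : Measurable φ := hφ.2.2.1.measurable

lemma s4_g_meas {φ : ℝ → EReal} (hφ : memSC0 φ) : Measurable (gReal φ) :=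
  (s4_expE_meas.comp (s4_meas hφ)).ennreal_toReal

lemma s4_g_int {φ : ℝ → EReal} (hφ : memSC0 φ) (h : (∫⁻ x, expE (φ x)) ≠ ⊤) :
    Integrable (gReal φ) :=
  integrable_toReal_of_lintegral_ne_top (s4_expE_meas.comp (s4_meas hφ)).aemeasurable h

lemma s4_lint {φ : ℝ → EReal} (hφ : memSC0 φ) (h : (∫⁻ x, expE (φ x)) ≠ ⊤) :
    (∫⁻ x, expE (φ x)) = ENNReal.ofReal (∫ x, gReal φ x) := by
  unfold gReal
  rw [integral_toReal (f := fun x => expE (φ x)) (s4_expE_meas.comp (s4_meas hφ)).aemeasurable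
    (Eventually.of_forall fun x => s4_expE_lt (hφ.1 x)), ENNReal.ofReal_toReal h]

lemma s4_fin {φ : ℝ → EReal} (hφ : memSC0 φ) {M : ℝ} (h : ∀ x, M < |x| → φ x = ⊥) :
    (∫⁻ x, expE (φ x)) ≠ ⊤ := by
  refine ne_top_of_le_ne_top ?_ (lintegral_mono (g := (Icc (-M) M).indicator fun _ => expE (φ 0)) ?_)
  · rw [lintegral_indicator measurableSet_Icc, setLIntegral_const]
    exact ENNReal.mul_ne_top (s4_expE_lt (hφ.1 0)).ne (by simp)
  · intro x
    by_cases hx : |x| ≤ M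
    · have : x ∈ Icc (-M) M := abs_le.1 hx
      simp only [indicator_of_mem this]
      exact s4_expE_mono (s4_anti hφ (by simp))
    · simp [h x (not_le.1 hx), expE]

lemma s4_exp_int {b : ℝ} (hb : 0 < b) : Integrable (fun x : ℝ => Real.exp (-b * |x|)) := by
  have h := integrableOn_exp_mul_Ioi (neg_lt_zero.2 hb) 0
  have h' := integrableOn_exp_mul_Iic hb 0
  rw [← integrableOn_univ, ← Iic_union_Ioi (a := (0:ℝ))]
  refine IntegrableOn.union ?_ ?_
  · refine h'.congr_fun ?_ measurableSet_Iic
    intro x hx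
    simp only [abs_of_nonpos (mem_Iic.1 hx)]; congr 1; ring
  · refine h.congr_fun ?_ measurableSet_Ioi
    intro x hx
    simp only [abs_of_pos (mem_Ioi.1 hx)]

lemma s4_moment {φ : ℝ → EReal} (hφ : memSC0 φ) (h : (∫⁻ x, expE (φ x)) ≠ ⊤) :
    Integrable (fun x => |x| * gReal φ x) := by
  have hm : AEStronglyMeasurable (fun x => |x| * gReal φ x) volume :=
    (measurable_norm.mul (s4_g_meas hφ)).aestronglyMeasurable
  have h0 := s4_zero_ne_bot hφ
  by_cases hex : ∃ a, 0 < a ∧ φ a < φ 0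
  swap
  · exfalso
    push Not at hex
    apply h
    have : ∀ x, expE (φ x) = expE (φ 0) := by
      intro x
      refine le_antisymm (s4_expE_mono (s4_anti hφ (by simp))) (s4_expE_mono ?_)
      rcases eq_or_ne x 0 with rfl | hx
      · exact le_rfl
      · exact (hex |x| (abs_pos.2 hx)).trans (s4_anti hφ (by simp))
    simp only [this, lintegral_const, Real.volume_univ]
    apply ENNReal.mul_top
    simp [expE, h0, (hφ.1 0).ne, Real.exp_pos]
  obtain ⟨a, ha, hlt⟩ := hex
  by_cases hab : φ a = ⊥
  · refine Integrable.mono' ((s4_g_int hφ h).const_mul a) hm (Eventually.of_forall fun x => ?_)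
    rw [Real.norm_eq_abs, abs_of_nonneg (mul_nonneg (abs_nonneg x) (s4_g_nonneg φ x))]
    by_cases hx : |x| ≤ a
    · exact mul_le_mul_of_nonneg_right hx (s4_g_nonneg φ x)
    · have : φ x = ⊥ := by
        by_contra hne
        exact s4_ne_bot hφ (by rw [abs_of_pos ha]; exact (not_le.1 hx).le) hne hab
      simp [s4_g_bot this]
  set f0 := (φ 0).toReal with hf0
  set fa := (φ a).toReal with hfa
  have hlt' : fa < f0 := by
    have := hlt
    rwa [← EReal.coe_toReal (hφ.1 a).ne hab, ← EReal.coe_toReal (hφ.1 0).ne h0,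
      EReal.coe_lt_coe_iff] at this
  obtain ⟨c, hc, hca⟩ : ∃ c, 0 < c ∧ c * a = f0 - fa :=
    ⟨(f0 - fa) / a, div_pos (sub_pos.2 hlt') ha, by field_simp⟩
  refine Integrable.mono' ((s4_exp_int (half_pos hc)).const_mul (2 / c * Real.exp (f0 + c * a)))
    hm (Eventually.of_forall fun x => ?_)
  rw [Real.norm_eq_abs, abs_of_nonneg (mul_nonneg (abs_nonneg x) (s4_g_nonneg φ x))]
  by_cases hx : φ x = ⊥
  · rw [s4_g_bot hx]; simp; positivity
  have hfx : (φ x).toReal ≤ f0 + c * a - c * |x| := by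
    by_cases hxa : |x| ≤ a
    · have h1 := s4_toReal_anti hφ (x := x) (y := 0) (by simp) hx
      nlinarith
    · have hxa := not_le.1 hxa
      have hxp : 0 < |x| := ha.trans hxa
      have hx' : φ |x| ≠ ⊥ := s4_ne_bot hφ (by simp) hx
      have h1 := ((s4_concave_iff φ hφ.1).1 hφ.2.2.2.1 |x| 0 (a / |x|) (by positivity)
        ((div_lt_one hxp).2 hxa) hx' h0).2
      have e : a / |x| * |x| + (1 - a / |x|) * 0 = a := by field_simp; ring
      rw [e] at h1
      have h2 := s4_toReal_anti hφ (x := x) (y := |x|) (by simp) hx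
      set r := a / |x| with hr
      have hr0 : 0 < r := by positivity
      have hra : r * |x| = a := by rw [hr]; field_simp
      have h3 : r * (φ x).toReal ≤ r * (f0 - c * |x|) := by
        have := mul_le_mul_of_nonneg_left h2 hr0.le
        have e2 : r * (f0 - c * |x|) = r * f0 - c * a := by rw [← hra]; ring
        rw [e2]; nlinarith
      have h4 := le_of_mul_le_mul_left h3 hr0
      nlinarith
  rw [s4_g_exp hφ hx]
  have k1 : |x| ≤ 2 / c * Real.exp (c / 2 * |x|) := by
    have := Real.add_one_le_exp (c / 2 * |x|)
    have k : c / 2 * |x| ≤ Real.exp (c / 2 * |x|) := by linarith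
    have := mul_le_mul_of_nonneg_left k (by positivity : 0 ≤ 2 / c)
    have e : 2 / c * (c / 2 * |x|) = |x| := by field_simp
    linarith
  calc |x| * Real.exp (φ x).toReal
      ≤ (2 / c * Real.exp (c / 2 * |x|)) * Real.exp (f0 + c * a - c * |x|) := by
        gcongr
    _ = 2 / c * Real.exp (f0 + c * a) * Real.exp (-(c / 2) * |x|) := by
        rw [mul_assoc, mul_assoc, ← Real.exp_add, ← Real.exp_add]; congr 2; ring

lemma s4_int_pos {f : ℝ → ℝ} (hf : Integrable f) (h0 : ∀ x, 0 ≤ f x) {a b : ℝ} (hab : a < b)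
    (hp : ∀ x ∈ Ioo a b, 0 < f x) : 0 < ∫ x, f x := by
  rw [integral_pos_iff_support_of_nonneg h0 hf]
  refine lt_of_lt_of_le ?_ (measure_mono (fun x hx => (hp x hx).ne' : Ioo a b ⊆ _))
  simp [hab]

/-! empirical -/
lemma s4_emp_int {n : ℕ} (X : Fin n → ℝ) (f : ℝ → ℝ) :
    ∫ x, f x ∂(empMeas X) = (n : ℝ)⁻¹ * ∑ i, f (X i) := by
  unfold empMeas
  rw [integral_smul_measure, integral_finsetSum_measure]
  · simp
  · intro i _
    exact integrable_dirac (by simp)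

lemma s4_emp_lint {n : ℕ} (X : Fin n → ℝ) (f : ℝ → ℝ≥0∞) :
    ∫⁻ x, f x ∂(empMeas X) = (n : ℝ≥0∞)⁻¹ * ∑ i, f (X i) := by
  unfold empMeas
  rw [lintegral_smul_measure, lintegral_finsetSum_measure]
  simp

lemma s4_Psi_bot1 {n : ℕ} (X : Fin n → ℝ) (θ : ℝ) (φ : ℝ → EReal)
    {i : Fin n} (hi : φ (X i - θ) = ⊥) : Psi θ φ (empMeas X) = ⊥ := by
  have hs : ∑ i, toENN (-(φ (X i - θ))) = ⊤ := by
    rw [ENNReal.sum_eq_top]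
    exact ⟨i, Finset.mem_univ _, by simp [toENN, hi]⟩
  have : (n : ℝ≥0∞)⁻¹ ≠ 0 := by simp
  unfold Psi eIntegral
  rw [s4_emp_lint, s4_emp_lint, hs, ENNReal.mul_top this]
  simp [sub_eq_add_neg]

lemma s4_Psi_bot2 (μ : Measure ℝ) (θ : ℝ) (φ : ℝ → EReal)
    (hi : (∫⁻ x, expE (φ x)) = ⊤) : Psi θ φ μ = ⊥ := by
  unfold Psi
  rw [hi]; simp [sub_eq_add_neg]

lemma s4_Psi_eq {n : ℕ} (hn : n ≠ 0) (X : Fin n → ℝ) (θ : ℝ) {φ : ℝ → EReal} (hφ : memSC0 φ)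
    (hi : ∀ i, φ (X i - θ) ≠ ⊥) (hf : (∫⁻ x, expE (φ x)) ≠ ⊤) :
    Psi θ φ (empMeas X) =
      (((n : ℝ)⁻¹ * ∑ i, (φ (X i - θ)).toReal - ∫ x, gReal φ x : ℝ) : EReal) := by
  have hn' : (n : ℝ≥0∞)⁻¹ = ENNReal.ofReal (n : ℝ)⁻¹ := by
    rw [ENNReal.ofReal_inv_of_pos (by positivity)]; simp
  have aux : ∀ r : Fin n → ℝ, (n : ℝ≥0∞)⁻¹ * ∑ i, ENNReal.ofReal (r i) =
      ENNReal.ofReal ((n : ℝ)⁻¹ * ∑ i, max (r i) 0) := by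
    intro r
    rw [hn', ENNReal.ofReal_mul (by positivity), ENNReal.ofReal_sum_of_nonneg (by simp)]
    simp
  have t1 : ∀ i, toENN (φ (X i - θ)) = ENNReal.ofReal (φ (X i - θ)).toReal := by
    intro i; simp [toENN, (hφ.1 _).ne]
  have t2 : ∀ i, toENN (-φ (X i - θ)) = ENNReal.ofReal (-(φ (X i - θ)).toReal) := by
    intro i; simp [toENN, hi i]
  unfold Psi eIntegral
  rw [s4_emp_lint, s4_emp_lint, s4_lint hφ hf]
  simp only [t1, t2, aux]
  have co : ∀ r : ℝ, 0 ≤ r → ((ENNReal.ofReal r : ℝ≥0∞) : EReal) = (r : EReal) := by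
    intro r hr; simp [hr]
  rw [co _ (by positivity), co _ (by positivity), co _ (integral_nonneg (s4_g_nonneg φ)),
    ← EReal.coe_sub, ← EReal.coe_sub, ← mul_sub, ← Finset.sum_sub_distrib]
  congr 4
  ext i
  rcases le_total 0 (φ (X i - θ)).toReal with h | h
  · rw [max_eq_left h, max_eq_right (by linarith)]; ring
  · rw [max_eq_right h, max_eq_left (by linarith)]; ring

lemma s4_delta {φ ψ : ℝ → EReal} (hφ : memSC0 φ) (hψ : memSC0 ψ) {M : ℝ} (hM : 0 ≤ M)
    (h1 : φ M ≠ ⊥) (h2 : ψ M ≠ ⊥) :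
    ∃ B, 0 ≤ B ∧ ∀ x, |x| ≤ M → |(φ x).toReal - (ψ x).toReal| ≤ B := by
  refine ⟨|(φ 0).toReal| + |(φ M).toReal| + |(ψ 0).toReal| + |(ψ M).toReal|, by positivity, ?_⟩
  intro x hx
  have hx' : |x| ≤ |M| := by rwa [abs_of_nonneg hM]
  have a1 := s4_toReal_anti hφ hx' h1
  have a2 := s4_toReal_anti hψ hx' h2
  have b1 := s4_toReal_anti hφ (x := x) (y := 0) (by simp) (s4_ne_bot hφ hx' h1)
  have b2 := s4_toReal_anti hψ (x := x) (y := 0) (by simp) (s4_ne_bot hψ hx' h2)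
  have := abs_le.1 (le_refl |(φ 0).toReal|)
  have := abs_le.1 (le_refl |(φ M).toReal|)
  have := abs_le.1 (le_refl |(ψ 0).toReal|)
  have := abs_le.1 (le_refl |(ψ M).toReal|)
  rw [abs_le]
  constructor <;> linarith

lemma s4_delta_int {φ ψ : ℝ → EReal} (hφ : memSC0 φ) (hψ : memSC0 ψ) {M B : ℝ}
    (hB : ∀ x, |x| ≤ M → |(φ x).toReal - (ψ x).toReal| ≤ B)
    (h3 : ∀ x, M < |x| → ψ x = ⊥) (hg : Integrable (gReal ψ)) :
    Integrable (fun x => ((φ x).toReal - (ψ x).toReal) * gReal ψ x) := by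
  refine Integrable.mono' (hg.const_mul B) ?_ (Eventually.of_forall fun x => ?_)
  · exact (((s4_meas hφ).ereal_toReal.sub (s4_meas hψ).ereal_toReal).mul
      (s4_g_meas hψ)).aestronglyMeasurable
  · rw [Real.norm_eq_abs, abs_mul, abs_of_nonneg (s4_g_nonneg ψ x)]
    by_cases hx : |x| ≤ M
    · exact mul_le_mul_of_nonneg_right (hB x hx) (s4_g_nonneg ψ x)
    · simp [s4_g_bot (h3 x (not_le.1 hx))]

lemma s4_hinge {ψ : ℝ → EReal} (hψ : memSC0 ψ) (M : ℝ) :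
    memSC0 (fun x => ψ x + ((1 * (-max (|x| - M) 0) : ℝ) : EReal)) := by
  have hh : memSC0 (fun x => ((-max (|x| - M) 0 : ℝ) : EReal)) := by
    refine s4_coe (by fun_prop) ?_ (by simp)
    have h1 : ConvexOn ℝ univ (fun x : ℝ => |x|) := convexOn_norm convex_univ
    have h2 : ConvexOn ℝ univ (fun x : ℝ => |x| - M) := by
      simp only [sub_eq_add_neg]
      exact h1.add_const (-M)
    have h3 := h2.sup (convexOn_const 0 convex_univ)
    exact h3.neg
  have := s4_comb hψ hh one_pos one_pos (s4_zero_ne_bot hψ) (s4_zero_ne_bot hh)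
  simpa using this

lemma s4_line {ψ : ℝ → EReal} (hψ : memSC0 ψ) {Δ : ℝ → ℝ} {t s : ℝ}
    (h : memSC0 fun x => ψ x + ((t * Δ x : ℝ) : EReal)) (hs : 0 < s) (hst : s < t) :
    memSC0 fun x => ψ x + ((s * Δ x : ℝ) : EReal) := by
  have ht : 0 < t := hs.trans hst
  have h1 : 0 < 1 - s / t := sub_pos.2 ((div_lt_one ht).2 hst)
  have := s4_comb hψ h h1 (div_pos hs ht) (s4_zero_ne_bot hψ) (s4_zero_ne_bot h)
  convert this using 2 with x
  have hx' := (hψ.1 x).ne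
  generalize ψ x = a at *
  by_cases ha : a = ⊥
  · rw [ha, EReal.coe_mul_bot_of_pos h1, EReal.bot_add, EReal.bot_add]
  lift a to ℝ using ⟨hx', ha⟩
  norm_cast
  field_simp
  ring

lemma s4_forward {n : ℕ} (hn : n ≠ 0) (X : Fin n → ℝ) (θ : ℝ) (ψ : ℝ → EReal) (hψ : memSC0 ψ)
    (hdens : (∫⁻ x, expE (ψ x)) ≠ ⊤) {M : ℝ} (hM : 0 < M) (hXM : ∀ i, |X i - θ| ≤ M)
    (hM' : ∃ i, |X i - θ| = M)
    (hmax : ∀ ψ' : ℝ → EReal, memSC0 ψ' → Psi θ ψ' (empMeas X) ≤ Psi θ ψ (empMeas X))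
    (Δ : ℝ → ℝ) {t : ℝ} (ht : 0 < t) (hΔ : memSC0 fun x => ψ x + ((t * Δ x : ℝ) : EReal)) :
    (n : ℝ)⁻¹ * ∑ i, Δ (X i - θ) ≤ ∫ x, Δ x * gReal ψ x := by
  have hMM : |M| = M := abs_of_pos hM
  have hg := s4_g_int hψ hdens
  -- data in the domain
  have hdom : ∀ i, ψ (X i - θ) ≠ ⊥ := by
    intro i hi
    have h0 : memSC0 (fun _ : ℝ => ((0 : ℝ) : EReal)) :=
      s4_coe continuous_const (concaveOn_const 0 convex_univ) (by simp)
    have h1 := s4_restr h0 hM.le (EReal.coe_ne_bot _)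
    have h2 := hmax _ h1
    rw [s4_Psi_bot1 X θ ψ hi, s4_Psi_eq hn X θ h1 (by intro j; simp [s4restr, hXM j])
      (s4_fin h1 (M := M) (by intro x hx; simp [s4restr, not_le.2 hx]))] at h2
    exact EReal.coe_ne_bot _ (le_bot_iff.1 h2)
  have hψM : ψ M ≠ ⊥ := by
    obtain ⟨i, hi⟩ := hM'
    exact s4_ne_bot hψ (by rw [hi, hMM]) (hdom i)
  have hout : ∀ x, M < |x| → ψ x = ⊥ := by
    intro y hy
    by_contra hne
    have h1 := s4_restr hψ hM.le hψM
    have hf1 := s4_fin h1 (M := M) (by intro x hx; simp [s4restr, not_le.2 hx])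
    have h2 := hmax _ h1
    have e : ∀ i, s4restr ψ M (X i - θ) = ψ (X i - θ) := by intro j; simp [s4restr, hXM j]
    rw [s4_Psi_eq hn X θ hψ hdom hdens, s4_Psi_eq hn X θ h1 (by intro j; rw [e]; exact hdom j) hf1,
      EReal.coe_le_coe_iff] at h2
    simp only [e] at h2
    have h3 : 0 < ∫ x, (gReal ψ x - gReal (s4restr ψ M) x) := by
      refine s4_int_pos (hg.sub (s4_g_int h1 hf1)) ?_ hy ?_
      · intro x
        by_cases hx : |x| ≤ M
        · simp [gReal, s4restr, hx]
        · have : s4restr ψ M x = ⊥ := by simp [s4restr, hx]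
          rw [s4_g_bot this]; simpa using s4_g_nonneg ψ x
      · intro x hx
        have hxp : 0 < x := hM.trans hx.1
        have : s4restr ψ M x = ⊥ := by simp [s4restr, abs_of_pos hxp, hx.1]
        rw [s4_g_bot this, s4_g_exp hψ (s4_ne_bot hψ (by rw [abs_of_pos hxp]; exact hx.2.le) hne)]
        simpa using Real.exp_pos _
    rw [integral_sub hg (s4_g_int h1 hf1)] at h3
    linarith
  have hfin : ∀ x, |x| ≤ M → ψ x ≠ ⊥ := fun x hx => s4_ne_bot hψ (by rwa [hMM]) hψM
  have hval : ∀ s x, |x| ≤ M → ψ x + ((s * Δ x : ℝ) : EReal) =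
      (((ψ x).toReal + s * Δ x : ℝ) : EReal) := by
    intro s x hx
    rw [EReal.coe_add, EReal.coe_toReal (hψ.1 x).ne (hfin x hx)]
  obtain ⟨B, hB0, hB⟩ := s4_delta hΔ hψ hM.le (by rw [hval t M hMM.le]; exact EReal.coe_ne_bot _) hψM
  have hint := s4_delta_int hΔ hψ hB hout hg
  have hk : ∀ x, |x| ≤ M → (ψ x + ((t * Δ x : ℝ) : EReal)).toReal - (ψ x).toReal = t * Δ x := by
    intro x hx
    rw [hval t x hx, EReal.toReal_coe]; ring
  have hint' : Integrable (fun x => Δ x * gReal ψ x) := by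
    refine (hint.const_mul t⁻¹).congr (Eventually.of_forall fun x => ?_)
    by_cases hx : |x| ≤ M
    · simp only [hk x hx]; field_simp
    · simp [s4_g_bot (hout x (not_le.1 hx))]
  obtain ⟨C, hC0, hC⟩ : ∃ C, 0 < C ∧ ∀ x, |x| ≤ M → |Δ x| ≤ C := by
    refine ⟨B / t + 1, by positivity, fun x hx => ?_⟩
    have := hB x hx
    rw [hk x hx, abs_mul, abs_of_pos ht] at this
    have : |Δ x| ≤ B / t := by rw [le_div_iff₀ ht]; linarith
    linarith
  set G := ∫ x, gReal ψ x with hG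
  have hGnn : 0 ≤ G := integral_nonneg (s4_g_nonneg ψ)
  have main : ∀ s, 0 < s → s < t → s * C ≤ 1 →
      (n : ℝ)⁻¹ * ∑ i, Δ (X i - θ) ≤ (∫ x, Δ x * gReal ψ x) + s * (C ^ 2 * G) := by
    intro s hs hst hsC
    have h1 := s4_line hψ hΔ hs hst
    have hf1 := s4_fin h1 (M := M) (by intro x hx; rw [hout x hx, EReal.bot_add])
    have h2 := hmax _ h1
    rw [s4_Psi_eq hn X θ hψ hdom hdens, s4_Psi_eq hn X θ h1
      (by intro j; rw [hval s _ (hXM j)]; exact EReal.coe_ne_bot _) hf1,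
      EReal.coe_le_coe_iff] at h2
    have e : ∀ i, (ψ (X i - θ) + ((s * Δ (X i - θ) : ℝ) : EReal)).toReal =
        (ψ (X i - θ)).toReal + s * Δ (X i - θ) := by
      intro i; rw [hval s _ (hXM i), EReal.toReal_coe]
    simp only [e, Finset.sum_add_distrib, ← Finset.mul_sum] at h2
    have h3 : ∫ x, gReal (fun x => ψ x + ((s * Δ x : ℝ) : EReal)) x ≤
        ∫ x, (gReal ψ x + s * (Δ x * gReal ψ x) + s ^ 2 * C ^ 2 * gReal ψ x) := by
      refine integral_mono (s4_g_int h1 hf1)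
        ((hg.add (hint'.const_mul s)).add (hg.const_mul _)) ?_
      intro x
      by_cases hx : |x| ≤ M
      · have q1 : gReal (fun x => ψ x + ((s * Δ x : ℝ) : EReal)) x =
            gReal ψ x * Real.exp (s * Δ x) := by
          rw [s4_g_exp h1 (by rw [hval s x hx]; exact EReal.coe_ne_bot _), hval s x hx,
            s4_g_exp hψ (hfin x hx), ← Real.exp_add, EReal.toReal_coe]
        have q2 : |s * Δ x| ≤ s * C := by
          rw [abs_mul, abs_of_pos hs]; exact mul_le_mul_of_nonneg_left (hC x hx) hs.le
        have q3 := (abs_le.1 (Real.abs_exp_sub_one_sub_id_le (q2.trans hsC))).2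
        have q4 : (s * Δ x) ^ 2 ≤ (s * C) ^ 2 := sq_le_sq' (by linarith [(abs_le.1 q2).1])
          (abs_le.1 q2).2
        have q5 : Real.exp (s * Δ x) ≤ 1 + s * Δ x + s ^ 2 * C ^ 2 := by nlinarith
        have q6 := mul_le_mul_of_nonneg_left q5 (s4_g_nonneg ψ x)
        show gReal (fun x => ψ x + ((s * Δ x : ℝ) : EReal)) x ≤ 
          gReal ψ x + s * (Δ x * gReal ψ x) + s ^ 2 * C ^ 2 * gReal ψ x
        rw [q1]; linarith
      · have hb := hout x (not_le.1 hx)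
        have : (fun x => ψ x + ((s * Δ x : ℝ) : EReal)) x = ⊥ := by
          show ψ x + ((s * Δ x : ℝ) : EReal) = ⊥
          rw [hb, EReal.bot_add]
        show gReal (fun x => ψ x + ((s * Δ x : ℝ) : EReal)) x ≤ 
          gReal ψ x + s * (Δ x * gReal ψ x) + s ^ 2 * C ^ 2 * gReal ψ x
        rw [s4_g_bot this, s4_g_bot hb]; simp
    rw [integral_add (f := fun x => gReal ψ x + s * (Δ x * gReal ψ x))
      (hg.add (hint'.const_mul s)) (hg.const_mul _),
      integral_add hg (hint'.const_mul s), integral_const_mul, integral_const_mul] at h3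
    have h4 : s * ((n : ℝ)⁻¹ * ∑ i, Δ (X i - θ)) ≤
        s * ((∫ x, Δ x * gReal ψ x) + s * (C ^ 2 * G)) := by
      rw [← hG] at h3 h2
      linarith
    exact le_of_mul_le_mul_left h4 hs
  refine le_of_forall_pos_le_add fun ε hε => ?_
  set s := min (t / 2) (min (1 / C) (ε / (C ^ 2 * G + 1))) with hs
  have hK : 0 < C ^ 2 * G + 1 := by positivity
  have s0 : 0 < s := by
    refine lt_min (by positivity) (lt_min (by positivity) (by positivity))
  have s1 : s ≤ t / 2 := min_le_left _ _
  have s2 : s ≤ 1 / C := (min_le_right _ _).trans (min_le_left _ _)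
  have s3 : s ≤ ε / (C ^ 2 * G + 1) := (min_le_right _ _).trans (min_le_right _ _)
  rw [le_div_iff₀ hC0] at s2
  rw [le_div_iff₀ hK] at s3
  have := main s s0 (by linarith) s2
  linarith

lemma s4_backward {n : ℕ} (hn : n ≠ 0) (X : Fin n → ℝ) (θ : ℝ) (ψ : ℝ → EReal) (hψ : memSC0 ψ)
    (hdens : (∫⁻ x, expE (ψ x)) ≠ ⊤) {M : ℝ} (hM : 0 < M) (hXM : ∀ i, |X i - θ| ≤ M)
    (hM' : ∃ i, |X i - θ| = M)
    (H : ∀ Δ : ℝ → ℝ, (∃ t : ℝ, 0 < t ∧ memSC0 fun x => ψ x + ((t * Δ x : ℝ) : EReal)) →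
      (n : ℝ)⁻¹ * ∑ i, Δ (X i - θ) ≤ ∫ x, Δ x * gReal ψ x)
    (φ : ℝ → EReal) (hφ : memSC0 φ) : Psi θ φ (empMeas X) ≤ Psi θ ψ (empMeas X) := by
  classical
  have hMM : |M| = M := abs_of_pos hM
  have hg := s4_g_int hψ hdens
  have hdom : ∀ i, ψ (X i - θ) ≠ ⊥ := by
    intro i hi
    have h1 := H (fun x => if ψ x = ⊥ then 1 else 0) ⟨1, one_pos, by
      convert hψ using 2 with x
      by_cases hx : ψ x = ⊥ <;> simp [hx]⟩
    have h2 : ∫ x, (if ψ x = ⊥ then 1 else 0) * gReal ψ x = 0 := by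
      rw [← integral_zero ℝ ℝ]
      congr 1
      ext x
      by_cases hx : ψ x = ⊥
      · simp [s4_g_bot hx]
      · simp [hx]
    rw [h2] at h1
    have h3 : (0 : ℝ) < ∑ i, (if ψ (X i - θ) = ⊥ then 1 else 0) := by
      refine Finset.sum_pos' (fun j _ => by split_ifs <;> simp) ⟨i, Finset.mem_univ _, by simp [hi]⟩
    have h4 : (0 : ℝ) < (n : ℝ)⁻¹ := by positivity
    have := mul_pos h4 h3
    linarith
  have hψM : ψ M ≠ ⊥ := by
    obtain ⟨i, hi⟩ := hM'
    exact s4_ne_bot hψ (by rw [hi, hMM]) (hdom i)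
  have hout : ∀ x, M < |x| → ψ x = ⊥ := by
    intro y hy
    by_contra hne
    have h1 := H (fun x => -max (|x| - M) 0) ⟨1, one_pos, s4_hinge hψ M⟩
    have e : ∀ i, -max (|X i - θ| - M) 0 = 0 := by
      intro i; rw [max_eq_right (by linarith [hXM i])]; simp
    simp only [e] at h1
    have h3 : 0 < ∫ x, max (|x| - M) 0 * gReal ψ x := by
      refine s4_int_pos ?_ ?_ hy ?_
      · refine Integrable.mono' (s4_moment hψ hdens) ?_ (Eventually.of_forall fun x => ?_)
        · exact ((by fun_prop : Measurable fun x : ℝ => max (|x| - M) 0).mul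
            (s4_g_meas hψ)).aestronglyMeasurable
        · have : 0 ≤ max (|x| - M) 0 := le_max_right _ _
          rw [Real.norm_eq_abs, abs_of_nonneg (mul_nonneg this (s4_g_nonneg ψ x))]
          refine mul_le_mul_of_nonneg_right ?_ (s4_g_nonneg ψ x)
          exact max_le (by linarith) (abs_nonneg x)
      · intro x
        exact mul_nonneg (le_max_right _ _) (s4_g_nonneg ψ x)
      · intro x hx
        have hxp : 0 < x := hM.trans hx.1
        rw [s4_g_exp hψ (s4_ne_bot hψ (by rw [abs_of_pos hxp]; exact hx.2.le) hne)]
        refine mul_pos (lt_max_of_lt_left ?_) (Real.exp_pos _)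
        rw [abs_of_pos hxp]; linarith [hx.1]
    have e2 : ∫ x, -max (|x| - M) 0 * gReal ψ x = - ∫ x, max (|x| - M) 0 * gReal ψ x := by
      rw [← integral_neg]; congr 1; ext x; ring
    rw [e2] at h1
    simp at h1
    linarith
  have hfin : ∀ x, |x| ≤ M → ψ x ≠ ⊥ := fun x hx => s4_ne_bot hψ (by rwa [hMM]) hψM
  by_cases hφX : ∃ i, φ (X i - θ) = ⊥
  · obtain ⟨i, hi⟩ := hφX
    rw [s4_Psi_bot1 X θ φ hi]; exact bot_le
  push Not at hφX
  by_cases hφf : (∫⁻ x, expE (φ x)) = ⊤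
  · rw [s4_Psi_bot2 _ θ φ hφf]; exact bot_le
  have hφM : φ M ≠ ⊥ := by
    obtain ⟨i, hi⟩ := hM'
    exact s4_ne_bot hφ (by rw [hi, hMM]) (hφX i)
  have hfin' : ∀ x, |x| ≤ M → φ x ≠ ⊥ := fun x hx => s4_ne_bot hφ (by rwa [hMM]) hφM
  rw [s4_Psi_eq hn X θ hψ hdom hdens, s4_Psi_eq hn X θ hφ hφX hφf, EReal.coe_le_coe_iff]
  obtain ⟨B, hB0, hB⟩ := s4_delta hφ hψ hM.le hφM hψM
  have hint := s4_delta_int hφ hψ hB hout hg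
  have h1 := H (fun x => (φ x).toReal - (ψ x).toReal) ⟨1, one_pos, by
    convert s4_restr hφ hM.le hφM using 2 with x
    by_cases hx : |x| ≤ M
    · have hx1 := hfin x hx
      have hx2 := hfin' x hx
      have hx3 := (hψ.1 x).ne
      have hx4 := (hφ.1 x).ne
      simp only [s4restr, hx, if_true]
      generalize ψ x = a at *
      generalize φ x = b at *
      lift a to ℝ using ⟨hx3, hx1⟩
      lift b to ℝ using ⟨hx4, hx2⟩
      simp only [EReal.toReal_coe]
      norm_cast
      ring
    · simp only [s4restr, hx, if_false]
      rw [hout x (not_le.1 hx), EReal.bot_add]⟩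
  have h2 : ∫ x, ((φ x).toReal - (ψ x).toReal) * gReal ψ x ≤ ∫ x, (gReal φ x - gReal ψ x) := by
    refine integral_mono hint ((s4_g_int hφ hφf).sub hg) ?_
    intro x
    show ((φ x).toReal - (ψ x).toReal) * gReal ψ x ≤ gReal φ x - gReal ψ x
    by_cases hx : |x| ≤ M
    · rw [s4_g_exp hψ (hfin x hx), s4_g_exp hφ (hfin' x hx)]
      have k := Real.add_one_le_exp ((φ x).toReal - (ψ x).toReal)
      have k2 := mul_le_mul_of_nonneg_right k (Real.exp_pos (ψ x).toReal).le
      rw [← Real.exp_add, sub_add_cancel] at k2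
      linarith
    · rw [s4_g_bot (hout x (not_le.1 hx))]
      simpa using s4_g_nonneg φ x
  rw [integral_sub (s4_g_int hφ hφf) hg] at h2
  rw [Finset.sum_sub_distrib, mul_sub] at h1
  linarith



/-- Characterization of the MLE: with `θ̂` a maximizer of
`θ ↦ sup_{ψ ∈ SC₀} Ψₙ(θ, ψ)` and `ψ ∈ SC₀` with `∫ e^ψ = 1`, `g = e^ψ`, the pair `(θ̂, ψ)`
maximizes `Ψₙ` over `ℝ × SC₀` iff for every perturbation `Δ` with `ψ + tΔ ∈ SC₀` for some
`t > 0` one has `∫ Δ(x − θ̂) d𝔽ₙ(x) ≤ ∫ Δ(x) g(x) dx`. -/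
theorem statement4 {n : ℕ} (X : Fin n → ℝ) (hne : ∃ i j, X i ≠ X j)
    (θhat : ℝ) (hθ : ∀ θ' : ℝ, Ltheta θ' (empMeas X) ≤ Ltheta θhat (empMeas X))
    (ψ : ℝ → EReal) (hψ : memSC0 ψ)
    (hdens : (∫⁻ x, expE (ψ x)) = 1) :
    (∀ (θ' : ℝ) (ψ' : ℝ → EReal), memSC0 ψ' →
        Psi θ' ψ' (empMeas X) ≤ Psi θhat ψ (empMeas X)) ↔
      ∀ Δ : ℝ → ℝ,
        (∃ t : ℝ, 0 < t ∧ memSC0 fun x => ψ x + ((t * Δ x : ℝ) : EReal)) →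
        (∫ x, Δ (x - θhat) ∂(empMeas X)) ≤ ∫ x, Δ x * gReal ψ x := by
  have hfin : (∫⁻ x, expE (ψ x)) ≠ ⊤ := by rw [hdens]; simp
  obtain ⟨i1, j1, hij⟩ := hne
  have hn : n ≠ 0 := by rintro rfl; exact i1.elim0
  obtain ⟨i0, -, hi0⟩ := Finset.exists_max_image Finset.univ (fun i => |X i - θhat|)
    ⟨i1, Finset.mem_univ _⟩
  have hXM : ∀ i, |X i - θhat| ≤ |X i0 - θhat| := fun i => hi0 i (Finset.mem_univ _)
  have hM : 0 < |X i0 - θhat| := by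
    by_contra hcon
    have h0 : ∀ i, X i = θhat := by
      intro i
      have := abs_nonpos_iff.1 ((hXM i).trans (not_lt.1 hcon))
      linarith
    exact hij (by rw [h0, h0])
  constructor
  · rintro hmax Δ ⟨t, ht, hΔ⟩
    rw [s4_emp_int X (fun x => Δ (x - θhat))]
    exact s4_forward hn X θhat ψ hψ hfin hM hXM ⟨i0, rfl⟩ (hmax θhat) Δ ht hΔ
  · intro H θ' ψ' hψ'
    refine (le_iSup₂_of_le (f := fun φ (_ : φ ∈ {ψ : ℝ → EReal | memSC0 ψ}) =>
      Psi θ' φ (empMeas X)) ψ' hψ' le_rfl).trans ((hθ θ').trans ?_)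
    refine iSup₂_le fun φ hφ => ?_
    refine s4_backward hn X θhat ψ hψ hfin hM hXM ⟨i0, rfl⟩ ?_ φ hφ
    intro Δ hΔ
    have := H Δ hΔ
    rwa [s4_emp_int X (fun x => Δ (x - θhat))] at this
end

section
/- Let X₁, …, Xₙ be real numbers that are not all equal, and let (θ̂ₙ, ψ̂ₙ) be a maximizer of Ψₙ over ℝ × SC₀. Then the second moment of the density ĝₙ = e^{ψ̂ₙ} is bounded by the empirical second moment about θ̂ₙ: ∫_ℝ x² e^{ψ̂ₙ(x)} dx ≤ (1/n) Σᵢ (Xᵢ − θ̂ₙ)². -/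
open MeasureTheory Filter Set
open scoped ENNReal NNReal

namespace S7

lemma expE_eq (y : EReal) : expE y = EReal.exp y := by
  induction y using EReal.rec <;> simp [expE]

noncomputable def pert (ψ : ℝ → EReal) (t : ℝ) (x : ℝ) : EReal := ψ x + ((-(t * x ^ 2) : ℝ) : EReal)

lemma pert_mem {ψ : ℝ → EReal} (h : memSC0 ψ) {t : ℝ} (ht : 0 ≤ t) : memSC0 (pert ψ t) := by
  obtain ⟨h1, ⟨x0, h2⟩, h3, h4, h5⟩ := h
  refine ⟨fun x => ?_, ⟨x0, ?_⟩, ?_, ?_, ?_⟩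
  · exact EReal.add_lt_top (h1 x).ne (EReal.coe_ne_top _)
  · simp only [pert, ne_eq, EReal.add_eq_bot_iff, not_or]
    exact ⟨h2, EReal.coe_ne_bot _⟩
  · refine UpperSemicontinuous.add' h3 ?_ ?_
    · apply Continuous.upperSemicontinuous
      exact continuous_coe_real_ereal.comp (by fun_prop)
    · intro x
      exact EReal.continuousAt_add (.inr (EReal.coe_ne_bot _)) (.inr (EReal.coe_ne_top _))
  · intro x y s hs hs1
    have key := h4 x y s hs hs1
    simp only [pert]
    rw [EReal.left_distrib_of_nonneg_of_ne_top (by exact_mod_cast hs) (EReal.coe_ne_top _),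
      EReal.left_distrib_of_nonneg_of_ne_top (by exact_mod_cast sub_nonneg.2 hs1)
        (EReal.coe_ne_top _), add_add_add_comm]
    refine add_le_add key ?_
    norm_cast
    have : 0 ≤ t * (s * (1 - s) * (x - y) ^ 2) := by
      have := sub_nonneg.2 hs1
      positivity
    nlinarith
  · intro x
    simp [pert, h5 x]

lemma zero_mem : memSC0 (fun _ => 0) := by
  refine ⟨fun x => by simp, ⟨0, by simp⟩, ?_, ?_, fun _ => rfl⟩
  · exact upperSemicontinuous_const
  · intro x y s _ _
    simp

lemma lint_emp {n : ℕ} (X : Fin n → ℝ) (f : ℝ → ℝ≥0∞) :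
    ∫⁻ x, f x ∂(empMeas X) = (n : ℝ≥0∞)⁻¹ * ∑ i, f (X i) := by
  simp [empMeas, lintegral_smul_measure, lintegral_finsetSum_measure]

lemma lint_emp_real {n : ℕ} (hn : n ≠ 0) (X : Fin n → ℝ) (f : ℝ → ℝ≥0∞) (a : Fin n → ℝ)
    (h : ∀ i, f (X i) = ENNReal.ofReal (a i)) :
    ((∫⁻ x, f x ∂(empMeas X) : ℝ≥0∞) : EReal) = (((n : ℝ)⁻¹ * ∑ i, max (a i) 0 : ℝ) : EReal) := by
  have hs : 0 ≤ ∑ i, max (a i) 0 := Finset.sum_nonneg fun i _ => le_max_right _ _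
  have hn' : (0 : ℝ) < n := by positivity
  have : (n : ℝ≥0∞)⁻¹ * ∑ i, f (X i) = ENNReal.ofReal ((n : ℝ)⁻¹ * ∑ i, max (a i) 0) := by
    rw [ENNReal.ofReal_mul (by positivity), ENNReal.ofReal_inv_of_pos hn', ENNReal.ofReal_natCast,
      ENNReal.ofReal_sum_of_nonneg (fun i _ => le_max_right _ _)]
    congr 1
    refine Finset.sum_congr rfl fun i _ => ?_
    rw [h i]
    rcases le_total (a i) 0 with h0 | h0
    · simp [h0, ENNReal.ofReal_of_nonpos h0]
    · simp [h0]
  rw [lint_emp, this, EReal.coe_ennreal_ofReal, max_eq_left (by positivity)]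

lemma eInt_real {n : ℕ} (hn : n ≠ 0) (X : Fin n → ℝ) (f : ℝ → EReal) (a : Fin n → ℝ)
    (h : ∀ i, f (X i) = (a i : EReal)) :
    eIntegral (empMeas X) f = (((n : ℝ)⁻¹ * ∑ i, a i : ℝ) : EReal) := by
  unfold eIntegral
  rw [lint_emp_real hn X _ a (fun i => by simp [toENN, h i]),
    lint_emp_real hn X _ (fun i => - a i)
      (fun i => by rw [h i, ← EReal.coe_neg]; simp [toENN])]
  rw [← EReal.coe_sub, ← mul_sub, ← Finset.sum_sub_distrib]
  refine congrArg (fun z : ℝ => (((n : ℝ)⁻¹ * z : ℝ) : EReal)) (Finset.sum_congr rfl fun i _ => ?_)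
  rcases le_total (a i) 0 with h0 | h0 <;> simp [h0]

lemma eInt_ne_bot {n : ℕ} (X : Fin n → ℝ) (f : ℝ → EReal)
    (h : eIntegral (empMeas X) f ≠ ⊥) (i : Fin n) : f (X i) ≠ ⊥ := by
  intro hi
  apply h
  unfold eIntegral
  have : ∫⁻ x, toENN (-(f x)) ∂(empMeas X) = ⊤ := by
    rw [lint_emp]
    have : ∑ i, toENN (-(f (X i))) = ⊤ := by
      rw [ENNReal.sum_eq_top]
      exact ⟨i, Finset.mem_univ _, by simp [hi, toENN]⟩
    rw [this, ENNReal.mul_top]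
    simp
  rw [this]
  simp

lemma gauss_fin : ∫⁻ x, expE (pert (fun _ => 0) 1 x) ≠ ⊤ := by
  have h := (integrable_exp_neg_mul_sq (b := 1) one_pos).lintegral_lt_top
  refine ne_of_lt (lt_of_le_of_lt (lintegral_mono fun x => ?_) h)
  simp only [pert, zero_add, expE_eq, EReal.exp_coe]
  rw [neg_mul]

lemma lim_quot (c : ℝ) :
    Tendsto (fun k : ℕ => ENNReal.ofReal (((k : ℝ) + 1) * (1 - Real.exp (-(1 / ((k : ℝ) + 1) * c)))))
      atTop (nhds (ENNReal.ofReal c)) := by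
  apply ENNReal.tendsto_ofReal
  have hd : HasDerivAt (fun s : ℝ => -Real.exp (-(s * c))) c 0 := by
    have := (((hasDerivAt_id (0 : ℝ)).mul_const c).fun_neg.exp).fun_neg
    simpa using this
  have h2 := hd.tendsto_slope_zero
  have h3 : Tendsto (fun k : ℕ => 1 / ((k : ℝ) + 1)) atTop (nhdsWithin 0 {0}ᶜ) := by
    refine tendsto_nhdsWithin_iff.2 ⟨tendsto_one_div_add_atTop_nhds_zero_nat, ?_⟩
    refine Eventually.of_forall fun k => ?_
    have : (0 : ℝ) < 1 / ((k : ℝ) + 1) := by positivity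
    exact this.ne'
  refine (h2.comp h3).congr fun k => ?_
  simp
  left; ring

end S7

open S7

/-- The second moment of `ĝₙ = e^{ψ̂ₙ}` is bounded by the empirical
second moment about `θ̂ₙ`: `∫ x² e^{ψ̂ₙ(x)} dx ≤ n⁻¹ Σᵢ (Xᵢ − θ̂ₙ)²`. -/
theorem statement7 {n : ℕ} (X : Fin n → ℝ) (hne : ∃ i j, X i ≠ X j)
    (θhat : ℝ) (ψhat : ℝ → EReal)
    (hmax : IsMaximizer θhat ψhat (empMeas X)) :
    (∫⁻ x, ENNReal.ofReal (x ^ 2) * expE (ψhat x)) ≤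
      ENNReal.ofReal ((n : ℝ)⁻¹ * ∑ i, (X i - θhat) ^ 2) := by
  have hn : n ≠ 0 := by
    obtain ⟨i, _, _⟩ := hne
    rintro rfl
    exact i.elim0
  obtain ⟨hmem, hmx⟩ := hmax
  have hbot : Psi θhat ψhat (empMeas X) ≠ ⊥ := by
    have h := hmx 0 _ (pert_mem zero_mem zero_le_one)
    intro hb
    rw [hb, le_bot_iff] at h
    unfold Psi at h
    rw [eInt_real hn X _ (fun i => -(1 * (X i - 0) ^ 2)) (fun i => by simp only [pert, zero_add])] at h
    lift (∫⁻ x, expE (pert (fun _ => 0) 1 x)) to ℝ≥0 using gauss_fin with b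
    have : (((b : ℝ≥0∞)) : EReal) = ((b : ℝ) : EReal) := rfl
    rw [this, ← EReal.coe_sub] at h
    exact EReal.coe_ne_bot _ h
  have hI : ∫⁻ x, expE (ψhat x) ≠ ⊤ := by
    intro h
    apply hbot
    unfold Psi
    rw [h]
    simp
  have hE : eIntegral (empMeas X) (fun x => ψhat (x - θhat)) ≠ ⊥ := by
    intro h
    apply hbot
    unfold Psi
    rw [h]
    simp
  have hi : ∀ i, ∃ a : ℝ, ψhat (X i - θhat) = (a : EReal) := fun i =>
    ⟨(ψhat (X i - θhat)).toReal, (EReal.coe_toReal (hmem.1 _).ne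
      (eInt_ne_bot X (fun x => ψhat (x - θhat)) hE i)).symm⟩
  choose a ha using hi
  have hψm : Measurable (fun x => expE (ψhat x)) := by
    simp only [expE_eq]
    exact EReal.exp_monotone.measurable.comp hmem.2.2.1.measurable
  set S : ℝ := (n : ℝ)⁻¹ * ∑ i, (X i - θhat) ^ 2 with hS
  have hS0 : 0 ≤ S := by positivity
  have step : ∀ t : ℝ, 0 < t →
      ∫⁻ x, expE (ψhat x) * ENNReal.ofReal (1 - Real.exp (-(t * x ^ 2))) ≤
        ENNReal.ofReal (t * S) := by
    intro t ht
    have h := hmx θhat _ (pert_mem hmem ht.le)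
    unfold Psi at h
    rw [eInt_real hn X (fun x => ψhat (x - θhat)) a ha,
      eInt_real hn X (fun x => pert ψhat t (x - θhat)) (fun i => a i + -(t * (X i - θhat) ^ 2))
      (fun i => by simp only [pert, ha i]; norm_cast)] at h
    have hle : ∀ x : ℝ, Real.exp (-(t * x ^ 2)) ≤ 1 := fun x => by
      rw [Real.exp_le_one_iff]
      have : 0 ≤ t * x ^ 2 := by positivity
      linarith
    have hsplit : ∫⁻ x, expE (ψhat x) =
        (∫⁻ x, expE (ψhat x) * ENNReal.ofReal (1 - Real.exp (-(t * x ^ 2)))) +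
          ∫⁻ x, expE (pert ψhat t x) := by
      rw [← lintegral_add_left (by fun_prop)]
      refine lintegral_congr fun x => ?_
      simp only [pert, expE_eq, EReal.exp_add, EReal.exp_coe]
      rw [← mul_add, ← ENNReal.ofReal_add (sub_nonneg.2 (hle x)) (Real.exp_nonneg _)]
      simp
    rw [hsplit] at h hI
    obtain ⟨hA, hB⟩ := ENNReal.add_ne_top.1 hI
    generalize (∫⁻ x, expE (ψhat x) * ENNReal.ofReal (1 - Real.exp (-(t * x ^ 2)))) = A at *
    generalize (∫⁻ x, expE (pert ψhat t x)) = B at *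
    lift A to ℝ≥0 using hA
    lift B to ℝ≥0 using hB
    have e1 : (((B : ℝ≥0∞)) : EReal) = ((B : ℝ) : EReal) := rfl
    have e2 : (((A : ℝ≥0∞) + (B : ℝ≥0∞) : ℝ≥0∞) : EReal) = ((A + B : ℝ) : EReal) := rfl
    rw [e1, e2, ← EReal.coe_sub, ← EReal.coe_sub, EReal.coe_le_coe_iff, Finset.sum_add_distrib,
      Finset.sum_neg_distrib, ← Finset.mul_sum, mul_add] at h
    have h3 : (n : ℝ)⁻¹ * -(t * ∑ i, (X i - θhat) ^ 2) = -(t * S) := by rw [hS]; ring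
    rw [h3] at h
    rw [← ENNReal.ofReal_coe_nnreal]
    exact ENNReal.ofReal_le_ofReal (by linarith)
  let G : ℕ → ℝ → ℝ≥0∞ := fun k x => expE (ψhat x) *
    ENNReal.ofReal (((k : ℝ) + 1) * (1 - Real.exp (-(1 / ((k : ℝ) + 1) * x ^ 2))))
  have hG : ∀ k, ∫⁻ x, G k x ≤ ENNReal.ofReal S := by
    intro k
    have hk : (0 : ℝ) < (k : ℝ) + 1 := by positivity
    have h := step (1 / ((k : ℝ) + 1)) (by positivity)
    have e : ∫⁻ x, G k x = ENNReal.ofReal ((k : ℝ) + 1) *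
        ∫⁻ x, expE (ψhat x) * ENNReal.ofReal (1 - Real.exp (-(1 / ((k : ℝ) + 1) * x ^ 2))) := by
      rw [← lintegral_const_mul _ (by fun_prop)]
      refine lintegral_congr fun x => ?_
      simp only [G]
      rw [ENNReal.ofReal_mul hk.le]
      ring
    rw [e]
    refine (mul_le_mul_right h _).trans ?_
    rw [← ENNReal.ofReal_mul hk.le]
    apply ENNReal.ofReal_le_ofReal
    field_simp
    exact le_rfl
  calc ∫⁻ x, ENNReal.ofReal (x ^ 2) * expE (ψhat x)
      = ∫⁻ x, liminf (fun k => G k x) atTop := by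
        refine lintegral_congr fun x => ?_
        rw [mul_comm]
        refine (Tendsto.liminf_eq ?_).symm
        refine ENNReal.Tendsto.const_mul (lim_quot (x ^ 2)) (Or.inr ?_)
        rw [expE_eq, ne_eq, EReal.exp_eq_top_iff]
        exact (hmem.1 x).ne
    _ ≤ liminf (fun k => ∫⁻ x, G k x) atTop := lintegral_liminf_le fun k => by
        simp only [G]
        fun_prop
    _ ≤ liminf (fun _ : ℕ => ENNReal.ofReal S) atTop :=
        liminf_le_liminf (Eventually.of_forall hG)
    _ = ENNReal.ofReal S := liminf_const _
end
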